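/- Let K be a compact Hausdorff space. Then K is a Corson compact if and only if every continuous image of K (i.e., every compact Hausdorff space L such that there is a continuous surjection from K onto L) has a retractional skeleton. -/

import Mathlib

/-!
Let `K ⊆ Σ(I)` be compact and let `f : K → L` be a continuous surjection. Say that a countable
`B ⊆ I` is admissible if setting the coordinates outside `B` to zero maps `K` into itself and
respects the fibres of `f`. Each admissible set induces a retraction of `L` with metrizable range.
A closing-off argument applied to the fibre relation of `f` shows that admissible sets are cofinal
among the countable ones; since they are closed under unions of increasing sequences, the
retractions form a skeleton.

Conversely, `K` itself has a skeleton `(r s)`. Let `D` be the union of the ranges of the `r s`.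

If `D = K`, then `K` is Corson. The retractions with index in a directed set have a limit
retraction. For the directed hulls of sets `Y` of indices, induction on the cardinality of `Y` along
well-ordered exhaustions of `Y` produces a continuous map into a `Σ`-product which identifies the
same points as this limit retraction. Countable tightness of `D` ensures that a given point is moved
at only countably many steps of the exhaustion.

If some `x` is not in `D`, then some image of `K` has no skeleton. Take an increasing chain of
indices `c ξ`, `ξ < ω₁`, continuous at limits, along which `r (c ξ) x` keeps changing. The points
`X ξ = r (c ξ) x` form a copy of `[0, ω₁)` in which initial segments are cut off by continuous
functions on `K`. Split `ω₁` into blocks of length `ω + ω` and glue the limit point in the middle of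
each block to the limit point at its end. The resulting double points lie in the set induced by any
skeleton of the quotient: there is a function, continuous off the double point, with values `0`
and `1` on two sequences converging to it, and a large retraction preserving these values cannot
move the double point. Glue moreover the limit `y` of the first `ω` double points to a cluster point
of all of them. The class of `y` lies in the induced set, being in the closure of countably many
double points, and it is in the closure of the double points with index at least `ω`. By countable
tightness it is then in the closure of countably many of these, but a continuous function separates
it from them.
-/

open Filter Topology TopologicalSpace Set

universe u v

/-- A retractional skeleton in a topological space `K`: a family `r s : C(K, K)` of continuous
retractions indexed by an up-directed (nonempty) partially ordered set `Γ` such that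
(i) each `r s` has metrizable range and the net `(r s x)` converges to `x`;
(ii) `s ≤ t` implies `r s ∘ r t = r t ∘ r s = r s`;
(iii) each strictly increasing sequence has a supremum `t` and `r t x = lim_n r (f n) x`. -/
structure RetractionalSkeleton (K : Type u) [TopologicalSpace K] : Type (u + 1) where
  Γ : Type u
  [po : PartialOrder Γ]
  [ne : Nonempty Γ]
  directed : ∀ s t : Γ, ∃ w, s ≤ w ∧ t ≤ w
  r : Γ → C(K, K)
  isRetraction : ∀ s, ∀ x : K, r s (r s x) = r s x
  metrizable : ∀ s, MetrizableSpace ↥(Set.range (r s))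
  tendsto_id : ∀ x : K, Tendsto (fun s => r s x) atTop (𝓝 x)
  comp_eq_of_le : ∀ s t : Γ, s ≤ t → ∀ x : K, r s (r t x) = r s x ∧ r t (r s x) = r s x
  sup_seq : ∀ f : ℕ → Γ, StrictMono f → ∃ t : Γ, IsLUB (Set.range f) t ∧
    ∀ x : K, Tendsto (fun n => r (f n) x) atTop (𝓝 (r t x))

/-- The set `D(𝔰) = ⋃ s, r s [K]` induced by a retractional skeleton. -/
def RetractionalSkeleton.inducedSet {K : Type u} [TopologicalSpace K]
    (𝔰 : RetractionalSkeleton K) : Set K := ⋃ s, Set.range (𝔰.r s)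

/-- `D` is induced by an r-skeleton in `K`. -/
def IsInducedByRSkeleton {K : Type u} [TopologicalSpace K] (D : Set K) : Prop :=
  ∃ 𝔰 : RetractionalSkeleton K, 𝔰.inducedSet = D

/-- `K` has a retractional skeleton. -/
def HasRetractionalSkeleton (K : Type u) [TopologicalSpace K] : Prop :=
  Nonempty (RetractionalSkeleton K)

/-- `K` is a Corson compact space: it is homeomorphic to a compact subset of
`Σ(Γ) = {x ∈ ℝ^Γ : x γ ≠ 0 for at most countably many γ}` for some set `Γ`. -/
def IsCorsonCompact (K : Type u) [TopologicalSpace K] : Prop :=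
  ∃ (Γ : Type u) (A : Set (Γ → ℝ)), IsCompact A ∧
    (∀ x ∈ A, {γ | x γ ≠ 0}.Countable) ∧ Nonempty (K ≃ₜ ↥A)

/-! ### Countability and compactness -/

theorem metrizableSpace_of_surjective {X Y : Type*} [TopologicalSpace X] [CompactSpace X]
    [MetrizableSpace X] [TopologicalSpace Y] [T2Space Y] {f : X → Y} (hf : Continuous f)
    (hsurj : Function.Surjective f) : MetrizableSpace Y := by
  have : CompactSpace Y := hsurj.compactSpace hf
  have hemb : Isometry fun φ : C(Y, ℝ) => φ.comp ⟨f, hf⟩ := by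
    refine Isometry.of_dist_eq fun φ ψ => le_antisymm ?_ ?_
    · exact (ContinuousMap.dist_le dist_nonneg).2 fun x => φ.dist_apply_le_dist (f x)
    · refine (ContinuousMap.dist_le dist_nonneg).2 (hsurj.forall.2 fun x => ?_)
      exact ContinuousMap.dist_apply_le_dist (f := φ.comp ⟨f, hf⟩) (g := ψ.comp ⟨f, hf⟩) x
  have : SecondCountableTopology C(Y, ℝ) := hemb.isEmbedding.secondCountableTopology
  refine Metric.PiNatEmbed.TopologicalSpace.MetrizableSpace.of_countable_separating
    (fun n => denseSeq C(Y, ℝ) n) (fun n => map_continuous _) fun x y hxy => ?_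
  obtain ⟨φ, hφx, hφy, -⟩ := exists_continuous_zero_one_of_isClosed (isClosed_singleton (x := x))
    (isClosed_singleton (x := y)) (disjoint_singleton.2 hxy)
  have hφ : φ x ≠ φ y := by rw [hφx rfl, hφy rfl]; exact zero_ne_one
  exact (denseRange_denseSeq C(Y, ℝ)).exists_mem_open
    (isOpen_ne_fun (continuous_eval_const x) (continuous_eval_const y)) ⟨φ, hφ⟩

theorem exists_countable_subset_image_eq {α β : Type*} {f : α → β} {S : Set α} {T : Set β}
    (hT : T.Countable) (hTS : T ⊆ f '' S) : ∃ N ⊆ S, N.Countable ∧ f '' N = T := by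
  obtain ⟨N, hNS, hN⟩ := SurjOn.exists_bijOn_subset (hTS : SurjOn f S T)
  exact ⟨N, hNS, hN.mapsTo.countable_of_injOn hN.injOn hT, hN.image_eq⟩

theorem exists_countable_subset_image_subset_closure {α E : Type*} [TopologicalSpace E]
    [SecondCountableTopology E] (g : α → E) (S : Set α) :
    ∃ N ⊆ S, N.Countable ∧ g '' S ⊆ closure (g '' N) := by
  obtain ⟨T, hT, hST⟩ := TopologicalSpace.exists_countable_dense (g '' S)
  obtain ⟨N, hNS, hN, hNT⟩ :=
    exists_countable_subset_image_eq (hT.image Subtype.val) (Subtype.coe_image_subset _ T)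
  exact ⟨N, hNS, hN, fun z hz => hNT ▸ closure_subtype.1 (hST ⟨z, hz⟩)⟩

theorem exists_mem_closure_iUnion_forall_eq {X : Type*} [TopologicalSpace X] {E : ℕ → Type*}
    [∀ n, TopologicalSpace (E n)] [∀ n, T2Space (E n)] {g : ∀ n, X → E n}
    (hg : ∀ n, Continuous (g n)) (hmono : ∀ n x y, g (n + 1) x = g (n + 1) y → g n x = g n y)
    {N : ℕ → Set X} (hN : IsCompact (closure (⋃ n, N n))) {p : X}
    (hp : ∀ n, g n p ∈ closure (g n '' N n)) :
    ∃ c ∈ closure (⋃ n, N n), ∀ n, g n c = g n p := by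
  have hclosed : ∀ n, IsClosed {x | g n x = g n p} := fun n =>
    isClosed_eq (hg n) continuous_const
  have hne : (⋂ n, closure (⋃ n, N n) ∩ {x | g n x = g n p}).Nonempty := by
    refine IsCompact.nonempty_iInter_of_sequence_nonempty_isCompact_isClosed _
      (fun n x hx => ⟨hx.1, hmono n x p hx.2⟩) (fun n => ?_) (hN.inter_right (hclosed 0))
      fun n => isClosed_closure.inter (hclosed n)
    exact closure_minimal (image_mono ((subset_iUnion N n).trans subset_closure))
      (hN.image (hg n)).isClosed (hp n)
  obtain ⟨c, hc⟩ := hne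
  rw [mem_iInter] at hc
  exact ⟨c, (hc 0).1, fun n => (hc n).2⟩

/-! ### Continuous images of Corson compacta -/

section CoordinateRestriction

variable {I V : Type*} [TopologicalSpace V] [Zero V]

theorem continuous_indicator_pi (B : Set I) : Continuous (B.indicator : (I → V) → I → V) := by
  refine continuous_pi fun i => ?_
  by_cases hi : i ∈ B
  · simpa only [indicator_of_mem hi] using continuous_apply i
  · simpa only [indicator_of_notMem hi] using continuous_const

theorem tendsto_indicator_iUnion_pi {s : ℕ → Set I} (hs : Monotone s) (x : I → V) :
    Tendsto (fun n => (s n).indicator x) atTop (𝓝 ((⋃ n, s n).indicator x)) :=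
  tendsto_pi_nhds.2 fun i => (hs.tendsto_indicator s x i).mono_right (pure_le_nhds _)

theorem mapsTo_indicator_iUnion {T : Set (I → V)} (hT : IsClosed T) {s : ℕ → Set I}
    (hs : Monotone s) (h : ∀ n, MapsTo (s n).indicator T T) :
    MapsTo (⋃ n, s n).indicator T T := fun x hx =>
  hT.mem_of_tendsto (tendsto_indicator_iUnion_pi hs x) (Eventually.of_forall fun n => h n hx)

theorem eq_indicator_of_forall_domRestrict_eq [T2Space V] {s : ℕ → Set I} {N : Set (I → V)}
    (hN : ∀ y ∈ N, Function.support y ⊆ ⋃ n, s n) {x c : I → V} (hc : c ∈ closure N)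
    (hcx : ∀ n, (s n).domRestrict c = (s n).domRestrict x) : c = (⋃ n, s n).indicator x := by
  have hsupp : ∀ i ∉ ⋃ n, s n, c i = 0 := fun i hi =>
    have hclosed : IsClosed {y : I → V | y i = 0} :=
      isClosed_eq (continuous_apply i) continuous_const
    closure_minimal (fun y hy => Function.notMem_support.1 fun h => hi (hN y hy h)) hclosed hc
  funext i
  by_cases hi : i ∈ ⋃ n, s n
  · obtain ⟨n, hn⟩ := mem_iUnion.1 hi
    rw [indicator_of_mem hi]
    exact congrFun (hcx n) ⟨i, hn⟩
  · rw [indicator_of_notMem hi, hsupp i hi]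

/- Close `B₀` off: add the supports of countably many points of `T` which are dense in `T` as far
as the coordinates collected so far can see. -/
theorem exists_countable_superset_mapsTo_indicator [T2Space V] [SecondCountableTopology V]
    {T : Set (I → V)} (hT : IsCompact T) (hsupp : ∀ x ∈ T, (Function.support x).Countable)
    {B₀ : Set I} (hB₀ : B₀.Countable) :
    ∃ B, B₀ ⊆ B ∧ B.Countable ∧ MapsTo B.indicator T T := by
  choose N hNT hNc hNd using fun B : {B : Set I // B.Countable} =>
    have := B.2.to_subtype
    exists_countable_subset_image_subset_closure (B.1.domRestrict (π := fun _ => V)) T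
  let next : {B : Set I // B.Countable} → {B : Set I // B.Countable} := fun B =>
    ⟨B.1 ∪ ⋃ x ∈ N B, Function.support x,
      B.2.union ((hNc B).biUnion fun x hx => hsupp x (hNT B hx))⟩
  let s : ℕ → {B : Set I // B.Countable} := fun n => next^[n] ⟨B₀, hB₀⟩
  have hs_succ : ∀ n, s (n + 1) = next (s n) := fun n => Function.iterate_succ_apply' _ _ _
  have hnext : id ≤ next := fun B => show B.1 ⊆ (next B).1 from subset_union_left
  have hs : Monotone s := fun m n hmn => Function.monotone_iterate_of_id_le hnext hmn _
  have hNs : ∀ x ∈ ⋃ n, N (s n), Function.support x ⊆ ⋃ n, (s n).1 := fun x hx => by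
    obtain ⟨n, hn⟩ := mem_iUnion.1 hx
    refine Subset.trans ?_ (subset_iUnion _ (n + 1))
    rw [hs_succ]
    exact (subset_biUnion_of_mem hn).trans subset_union_right
  have hclosure : closure (⋃ n, N (s n)) ⊆ T :=
    closure_minimal (iUnion_subset fun n => hNT _) hT.isClosed
  refine ⟨⋃ n, (s n).1, subset_iUnion (fun n => (s n).1) 0, countable_iUnion fun n => (s n).2,
    fun x hx => ?_⟩
  obtain ⟨c, hc, hcx⟩ := exists_mem_closure_iUnion_forall_eq
    (g := fun n => (s n).1.domRestrict (π := fun _ => V)) (fun n => Pi.continuous_domRestrict _)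
    (fun n y z hyz => funext fun i => congrFun hyz ⟨i, hs n.le_succ i.2⟩)
    (hT.of_isClosed_subset isClosed_closure hclosure) fun n => hNd (s n) (mem_image_of_mem _ hx)
  exact eq_indicator_of_forall_domRestrict_eq hNs hc hcx ▸ hclosure hc

end CoordinateRestriction

section CorsonImage

theorem indicator_prodMk {I V W : Type*} [Zero V] [Zero W] (B : Set I) (a : I → V) (b : I → W) :
    B.indicator (fun i => (a i, b i)) = fun i => (B.indicator a i, B.indicator b i) := by
  classical
  funext i
  by_cases hi : i ∈ B
  · simp only [indicator_of_mem hi]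
  · simp only [indicator_of_notMem hi, Prod.mk_zero_zero]

variable {I L : Type*} [TopologicalSpace L] {A : Set (I → ℝ)}

/-- The fibre relation of `f : A → L`, for `A ⊆ ℝ^I`, with pairs of points of `ℝ^I` regarded as
points of `(ℝ × ℝ)^I`. -/
def fibrePairs (f : C(A, L)) : Set (I → ℝ × ℝ) :=
  {z | ∃ a b : A, f a = f b ∧ (fun i => (a.1 i, b.1 i)) = z}

/-- A countable set `B` of coordinates is admissible for `f : A → L`, where `A ⊆ ℝ^I`, if setting
the coordinates outside `B` to zero maps `A` into itself and respects the fibres of `f`. -/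
structure Admissible (f : C(A, L)) (B : Set I) : Prop where
  countable : B.Countable
  mapsTo : MapsTo B.indicator A A
  factorsThrough : Function.FactorsThrough (f ∘ mapsTo.restrict) f

variable {f : C(A, L)} {B : Set I}

theorem admissible_iff :
    Admissible f B ↔ B.Countable ∧ MapsTo B.indicator (fibrePairs f) (fibrePairs f) := by
  constructor
  · rintro ⟨hB, hBA, hf⟩
    refine ⟨hB, ?_⟩
    rintro _ ⟨a, b, hab, rfl⟩
    exact ⟨hBA.restrict _ _ _ a, hBA.restrict _ _ _ b, hf hab, (indicator_prodMk B a.1 b.1).symm⟩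
  · rintro ⟨hB, hBf⟩
    have key : ∀ a b : A, f a = f b → ∃ a' b' : A, a'.1 = B.indicator a.1 ∧
        b'.1 = B.indicator b.1 ∧ f a' = f b' := fun a b hab => by
      obtain ⟨a', b', hab', h⟩ := hBf ⟨a, b, hab, rfl⟩
      simp only [indicator_prodMk, funext_iff, Prod.mk.injEq] at h
      exact ⟨a', b', funext fun i => (h i).1, funext fun i => (h i).2, hab'⟩
    have hBA : MapsTo B.indicator A A := fun a ha => by
      obtain ⟨a', -, h, -⟩ := key ⟨a, ha⟩ ⟨a, ha⟩ rfl
      exact h ▸ a'.2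
    refine ⟨hB, hBA, fun a b hab => ?_⟩
    obtain ⟨a', b', ha, hb, h⟩ := key a b hab
    rwa [show a' = hBA.restrict _ _ _ a from Subtype.ext ha,
      show b' = hBA.restrict _ _ _ b from Subtype.ext hb] at h

theorem isCompact_fibrePairs [T2Space L] (hA : IsCompact A) (f : C(A, L)) :
    IsCompact (fibrePairs f) := by
  have := isCompact_iff_compactSpace.1 hA
  have hR : IsClosed {p : A × A | f p.1 = f p.2} := isClosed_eq (by fun_prop) (by fun_prop)
  have hc : Continuous fun (p : A × A) i => (p.1.1 i, p.2.1 i) := by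
    exact continuous_pi fun i => ((continuous_apply i).comp (by fun_prop)).prodMk
      ((continuous_apply i).comp (by fun_prop))
  convert hR.isCompact.image hc
  ext z
  simp only [fibrePairs, mem_image, Prod.exists, mem_ofPred_eq]

theorem Admissible.iUnion [T2Space L] (hA : IsCompact A) {s : ℕ → Set I} (hs : Monotone s)
    (h : ∀ n, Admissible f (s n)) : Admissible f (⋃ n, s n) :=
  admissible_iff.2 ⟨countable_iUnion fun n => (h n).countable, mapsTo_indicator_iUnion
    (isCompact_fibrePairs hA f).isClosed hs fun n => (admissible_iff.1 (h n)).2⟩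

theorem exists_admissible_superset [T2Space L] (hA : IsCompact A)
    (hsupp : ∀ x ∈ A, (Function.support x).Countable) (f : C(A, L)) {B₀ : Set I}
    (hB₀ : B₀.Countable) : ∃ B, B₀ ⊆ B ∧ Admissible f B := by
  have hsupp_pairs : ∀ z ∈ fibrePairs f, (Function.support z).Countable := by
    rintro _ ⟨a, b, -, rfl⟩
    exact (Function.support_prodMk a.1 b.1) ▸ (hsupp a a.2).union (hsupp b b.2)
  obtain ⟨B, hB₀B, hB⟩ :=
    exists_countable_superset_mapsTo_indicator (isCompact_fibrePairs hA f) hsupp_pairs hB₀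
  exact ⟨B, hB₀B, admissible_iff.2 hB⟩

namespace Admissible

/-- The self-map of `A` which sets the coordinates outside `B` to zero. -/
noncomputable def proj (hB : Admissible f B) : C(A, A) :=
  ⟨hB.mapsTo.restrict,
    ((continuous_indicator_pi B).comp continuous_subtype_val).subtype_mk _⟩

theorem coe_proj (hB : Admissible f B) (a : A) : (hB.proj a).1 = B.indicator a.1 := rfl

theorem proj_proj_of_subset {C : Set I} (hB : Admissible f B) (hC : Admissible f C) (hBC : B ⊆ C)
    (a : A) : hB.proj (hC.proj a) = hB.proj a :=
  Subtype.ext <| by simp only [coe_proj, indicator_indicator, inter_eq_left.2 hBC]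

theorem proj_proj_of_superset {C : Set I} (hB : Admissible f B) (hC : Admissible f C)
    (hBC : B ⊆ C) (a : A) : hC.proj (hB.proj a) = hB.proj a :=
  Subtype.ext <| by simp only [coe_proj, indicator_indicator, inter_eq_right.2 hBC]

theorem proj_eq_self (hB : Admissible f B) {a : A} (ha : Function.support a.1 ⊆ B) :
    hB.proj a = a :=
  Subtype.ext <| indicator_eq_self.2 ha

/-- The retraction of the quotient `L` of `A` induced by an admissible set of coordinates. -/
noncomputable def retraction (hB : Admissible f B) (hf : IsQuotientMap f) : C(L, L) :=
  hf.lift (f.comp hB.proj) hB.factorsThrough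

theorem retraction_apply (hB : Admissible f B) (hf : IsQuotientMap f) (a : A) :
    hB.retraction hf (f a) = f (hB.proj a) :=
  DFunLike.congr_fun (hf.lift_comp (f.comp hB.proj) hB.factorsThrough) a

theorem metrizableSpace_range_retraction [T2Space L] (hA : IsCompact A) (hB : Admissible f B)
    (hf : IsQuotientMap f) : MetrizableSpace (range (hB.retraction hf)) := by
  have := isCompact_iff_compactSpace.1 hA
  have := hB.countable.to_subtype
  have hAB : IsCompact (range hB.proj) := isCompact_range hB.proj.continuous
  have := isCompact_iff_compactSpace.1 hAB
  have hemb : IsEmbedding fun a : range hB.proj => B.domRestrict a.1.1 := by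
    refine (Continuous.isClosedEmbedding (by fun_prop) ?_).isEmbedding
    rintro ⟨_, a, rfl⟩ ⟨_, b, rfl⟩ hab
    have h := indicator_congr (domRestrict_eq_domRestrict_iff.1 hab)
    simp only [coe_proj, indicator_indicator, inter_self] at h
    exact Subtype.ext (Subtype.ext h)
  have := hemb.metrizableSpace
  refine metrizableSpace_of_surjective
    (f := fun a : range hB.proj => rangeFactorization (hB.retraction hf) (f a)) (by fun_prop) ?_
  rintro ⟨_, l, rfl⟩
  obtain ⟨a, rfl⟩ := hf.surjective l
  refine ⟨⟨_, a, rfl⟩, Subtype.ext ?_⟩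
  simp only [rangeFactorization_coe, retraction_apply, hB.proj_proj_of_subset hB Subset.rfl]

end Admissible

theorem hasRetractionalSkeleton_image {I L : Type u} {A : Set (I → ℝ)} [TopologicalSpace L]
    [T2Space L] (hA : IsCompact A) (hsupp : ∀ x ∈ A, (Function.support x).Countable)
    {f : C(A, L)} (hf : Function.Surjective f) : HasRetractionalSkeleton L := by
  have := isCompact_iff_compactSpace.1 hA
  have hq : IsQuotientMap f := f.continuous.isClosedMap.isQuotientMap f.continuous hf
  have hsup {B₀ : Set I} (hB₀ : B₀.Countable) := exists_admissible_superset hA hsupp f hB₀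
  obtain ⟨B₀, -, hB₀⟩ := hsup countable_empty
  refine ⟨{
    Γ := {B : Set I // Admissible f B}
    ne := ⟨⟨B₀, hB₀⟩⟩
    directed := fun B C => ?_
    r := fun B => B.2.retraction hq
    isRetraction := fun B => hf.forall.2 fun a => ?_
    metrizable := fun B => B.2.metrizableSpace_range_retraction hA hq
    tendsto_id := hf.forall.2 fun a => ?_
    comp_eq_of_le := fun B C hBC => hf.forall.2 fun a => ?_
    sup_seq := fun s hs => ?_ }⟩
  · obtain ⟨D, hD, hDf⟩ := hsup (B.2.countable.union C.2.countable)
    exact ⟨⟨D, hDf⟩, subset_union_left.trans hD, subset_union_right.trans hD⟩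
  · simp only [Admissible.retraction_apply, B.2.proj_proj_of_subset B.2 Subset.rfl]
  · obtain ⟨B, haB, hB⟩ := hsup (hsupp a a.2)
    refine tendsto_nhds_of_eventually_eq ?_
    filter_upwards [eventually_ge_atTop (⟨B, hB⟩ : {B // Admissible f B})] with C hC
    rw [Admissible.retraction_apply, C.2.proj_eq_self (haB.trans hC)]
  · simp only [Admissible.retraction_apply, B.2.proj_proj_of_subset C.2 hBC,
      B.2.proj_proj_of_superset C.2 hBC, and_self]
  · have hmono : Monotone fun n => (s n).1 := fun m n hmn => hs.monotone hmn
    let t : {B : Set I // Admissible f B} := ⟨_, Admissible.iUnion hA hmono fun n => (s n).2⟩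
    have ht : IsLUB (range s) t := ⟨forall_mem_range.2 fun n => subset_iUnion (fun n => (s n).1) n,
      fun C hC => iUnion_subset fun n => hC (mem_range_self n)⟩
    refine ⟨t, ht, hf.forall.2 fun a => ?_⟩
    simp only [Admissible.retraction_apply]
    exact (f.continuous.tendsto _).comp
      (tendsto_subtype_rng.2 (tendsto_indicator_iUnion_pi hmono a.1))

end CorsonImage

/-! ### Retractional skeletons -/

theorem exists_monotone_finset_upperBound (α : Type*) [Preorder α] [IsDirectedOrder α]
    [Nonempty α] : ∃ w : Finset α → α, Monotone w ∧ ∀ F, ∀ a ∈ F, a ≤ w F := by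
  classical
  choose ub hub using fun F : Finset α => F.exists_le
  let w : Finset α → α := Finset.strongInduction fun F ih =>
    ub (F ∪ F.ssubsets.attach.image fun G : {G // G ∈ F.ssubsets} =>
      ih G (Finset.mem_ssubsets.1 G.2))
  have hw : ∀ F a, (a ∈ F ∨ ∃ G ⊂ F, w G = a) → a ≤ w F := fun F a ha => by
    rw [show w F = _ from Finset.strongInduction_eq _ F]
    refine hub _ _ (Finset.mem_union.2 (ha.imp_right ?_))
    rintro ⟨G, hG, rfl⟩
    exact Finset.mem_image.2 ⟨⟨G, Finset.mem_ssubsets.2 hG⟩, Finset.mem_attach _ _, rfl⟩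
  refine ⟨w, fun G F hGF => ?_, fun F a ha => hw F a (Or.inl ha)⟩
  rcases hGF.eq_or_ssubset with rfl | hGF
  · exact le_rfl
  · exact hw F _ (Or.inr ⟨G, hGF, rfl⟩)

attribute [instance] RetractionalSkeleton.po RetractionalSkeleton.ne

namespace RetractionalSkeleton

variable {K : Type u} [TopologicalSpace K] (𝔰 : RetractionalSkeleton K)

instance : IsDirectedOrder 𝔰.Γ := ⟨𝔰.directed⟩

theorem fix_of_le {s t : 𝔰.Γ} (h : s ≤ t) {x : K} (hx : 𝔰.r s x = x) : 𝔰.r t x = x := by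
  have hts := (𝔰.comp_eq_of_le s t h x).2
  rwa [hx] at hts

theorem eq_of_le {s t : 𝔰.Γ} (h : s ≤ t) {x y : K} (hxy : 𝔰.r t x = 𝔰.r t y) :
    𝔰.r s x = 𝔰.r s y := by
  rw [← (𝔰.comp_eq_of_le s t h x).1, hxy, (𝔰.comp_eq_of_le s t h y).1]

theorem mem_inducedSet {x : K} : x ∈ 𝔰.inducedSet ↔ ∃ s, 𝔰.r s x = x := by
  simp only [inducedSet, mem_iUnion, mem_range]
  refine exists_congr fun s => ⟨?_, fun h => ⟨x, h⟩⟩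
  rintro ⟨y, rfl⟩
  exact 𝔰.isRetraction s y

theorem isClosed_fix [T2Space K] (s : 𝔰.Γ) : IsClosed {x | 𝔰.r s x = x} :=
  isClosed_eq (by fun_prop) continuous_id

theorem exists_ne_of_ne [T2Space K] {x y : K} (h : x ≠ y) : ∃ s, 𝔰.r s x ≠ 𝔰.r s y := by
  contrapose! h
  refine tendsto_nhds_unique (𝔰.tendsto_id x) ?_
  simpa only [h] using 𝔰.tendsto_id y

/-- Two points are identified by `kerOn A` if the retractions with index in `A` do not
distinguish them. -/
def kerOn (A : Set 𝔰.Γ) : Setoid K where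
  r x y := ∀ s ∈ A, 𝔰.r s x = 𝔰.r s y
  iseqv :=
    ⟨fun _ _ _ => rfl, fun h s hs => (h s hs).symm, fun h h' s hs => (h s hs).trans (h' s hs)⟩

theorem exists_upperBound_of_monotone [T2Space K] {f : ℕ → 𝔰.Γ} (hf : Monotone f) :
    ∃ t, (∀ n, f n ≤ t) ∧ 𝔰.kerOn (range f) ≤ Setoid.ker (𝔰.r t) := by
  by_cases hmax : ∃ N, ∀ n, f n ≤ f N
  · obtain ⟨N, hN⟩ := hmax
    exact ⟨f N, hN, fun x y hxy => hxy _ (mem_range_self N)⟩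
  push Not at hmax
  choose g hg using hmax
  have hfg : ∀ n, f n < f (g n) := fun n =>
    lt_of_le_not_ge (hf (le_of_not_ge fun h => hg n (hf h))) (hg n)
  have hsub : StrictMono fun n => f (g^[n] 0) := strictMono_nat_of_lt_succ fun n => by
    rw [Function.iterate_succ_apply']
    exact hfg _
  obtain ⟨t, ht, hlim⟩ := 𝔰.sup_seq _ hsub
  have hφ : StrictMono fun n => g^[n] 0 := fun m n hmn => hf.reflect_lt (hsub hmn)
  refine ⟨t, fun n => (hf hφ.le_apply).trans (ht.1 (mem_range_self n)), fun x y hxy => ?_⟩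
  refine tendsto_nhds_unique (hlim x) ?_
  simpa only [hxy _ (mem_range_self _)] using hlim y

theorem exists_upperBound_of_directedOn [T2Space K] {A : Set 𝔰.Γ} (hA : DirectedOn (· ≤ ·) A)
    (hne : A.Nonempty) {Z : Set 𝔰.Γ} (hZA : Z ⊆ A) (hZ : Z.Countable) :
    ∃ t, (∀ s ∈ Z, s ≤ t) ∧ 𝔰.kerOn A ≤ Setoid.ker (𝔰.r t) := by
  classical
  have := hne.to_subtype
  have : IsDirectedOrder A := ⟨hA.directed_val⟩
  obtain ⟨w, hw, hle⟩ := exists_monotone_finset_upperBound A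
  obtain ⟨z, hz⟩ := countable_iff_exists_subset_range.1
    (hZ.preimage (Subtype.val_injective (p := (· ∈ A))))
  have hf : Monotone fun n => (w ((Finset.range n).image z)).1 := fun m n hmn =>
    hw (Finset.image_mono z (Finset.range_subset_range.2 hmn))
  obtain ⟨t, ht, hker⟩ := 𝔰.exists_upperBound_of_monotone hf
  refine ⟨t, fun s hs => ?_, fun x y hxy => hker ?_⟩
  · obtain ⟨n, hn⟩ := hz (show ⟨s, hZA hs⟩ ∈ _ from hs)
    have hzn : z n ≤ w ((Finset.range (n + 1)).image z) :=
      hle _ _ (Finset.mem_image_of_mem z (Finset.self_mem_range_succ n))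
    rw [hn] at hzn
    exact le_trans hzn (ht (n + 1))
  · rintro _ ⟨n, rfl⟩
    exact hxy _ (w _).2

theorem bddAbove_of_countable [T2Space K] {Z : Set 𝔰.Γ} (hZ : Z.Countable) : BddAbove Z := by
  obtain ⟨t, ht, -⟩ := 𝔰.exists_upperBound_of_directedOn directedOn_univ univ_nonempty
    (subset_univ Z) hZ
  exact ⟨t, ht⟩

theorem exists_fix_of_countable [T2Space K] {S : Set K} (hS : S.Countable)
    (hSD : S ⊆ 𝔰.inducedSet) (s₀ : 𝔰.Γ) : ∃ t, s₀ ≤ t ∧ ∀ x ∈ S, 𝔰.r t x = x := by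
  choose! s hs using fun x (hx : x ∈ S) => 𝔰.mem_inducedSet.1 (hSD hx)
  obtain ⟨t, ht⟩ := 𝔰.bddAbove_of_countable ((hS.image s).insert s₀)
  exact ⟨t, ht (mem_insert _ _), fun x hx =>
    𝔰.fix_of_le (ht (mem_insert_of_mem _ (mem_image_of_mem s hx))) (hs x hx)⟩

theorem closure_subset_inducedSet [T2Space K] {S : Set K} (hS : S.Countable)
    (hSD : S ⊆ 𝔰.inducedSet) : closure S ⊆ 𝔰.inducedSet := by
  obtain ⟨t, -, ht⟩ := 𝔰.exists_fix_of_countable hS hSD (Classical.arbitrary _)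
  exact fun x hx => 𝔰.mem_inducedSet.2 ⟨t, closure_minimal ht (𝔰.isClosed_fix t) hx⟩

theorem exists_countable_subset_range_closure [CompactSpace K] (s : 𝔰.Γ) (S : Set K) :
    ∃ N ⊆ S, N.Countable ∧ 𝔰.r s '' S ⊆ closure (𝔰.r s '' N) := by
  have := 𝔰.metrizable s
  have := isCompact_iff_compactSpace.1 (isCompact_range (𝔰.r s).continuous)
  obtain ⟨N, hNS, hN, hSN⟩ :=
    exists_countable_subset_image_subset_closure (rangeFactorization (𝔰.r s)) S
  refine ⟨N, hNS, hN, ?_⟩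
  rintro _ ⟨x, hx, rfl⟩
  have h := closure_subtype.1 (hSN (mem_image_of_mem _ hx))
  rwa [image_image] at h

/-- The algebra of real continuous functions which factor through the retraction `r s`. -/
noncomputable def invariantAlgebra (s : 𝔰.Γ) : Subalgebra ℝ C(K, ℝ) :=
  AlgHom.equalizer (ContinuousMap.compRightAlgHom ℝ ℝ (𝔰.r s)) (AlgHom.id ℝ C(K, ℝ))

theorem mem_invariantAlgebra {s : 𝔰.Γ} {φ : C(K, ℝ)} :
    φ ∈ 𝔰.invariantAlgebra s ↔ ∀ x, φ (𝔰.r s x) = φ x := by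
  simp only [invariantAlgebra, AlgHom.mem_equalizer, ContinuousMap.ext_iff,
    ContinuousMap.compRightAlgHom_apply, AlgHom.coe_id, id_eq, ContinuousMap.comp_apply]

theorem invariantAlgebra_mono : Monotone 𝔰.invariantAlgebra := fun s t hst φ hφ => by
  rw [mem_invariantAlgebra] at hφ ⊢
  intro x
  rw [← hφ, (𝔰.comp_eq_of_le s t hst x).1, hφ]

variable [CompactSpace K] [T2Space K]

theorem exists_countable_mem_closure {S : Set K} (hS : S ⊆ 𝔰.inducedSet) {x : K}
    (hx : x ∈ 𝔰.inducedSet) (hxS : x ∈ closure S) : ∃ N ⊆ S, N.Countable ∧ x ∈ closure N := by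
  choose N hNS hNc hSN using fun s => 𝔰.exists_countable_subset_range_closure s S
  choose next hnext hfix using fun s =>
    𝔰.exists_fix_of_countable (hNc s) ((hNS s).trans hS) s
  obtain ⟨s₀, hs₀⟩ := 𝔰.mem_inducedSet.1 hx
  let s : ℕ → 𝔰.Γ := fun n => next^[n] s₀
  have hs_succ : ∀ n, s (n + 1) = next (s n) := fun n => Function.iterate_succ_apply' _ _ _
  have hs : Monotone s := fun m n hmn => Function.monotone_iterate_of_id_le hnext hmn s₀
  obtain ⟨t, ht, hker⟩ := 𝔰.exists_upperBound_of_monotone hs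
  have hNt : ∀ y ∈ ⋃ n, N (s n), 𝔰.r t y = y := fun y hy => by
    obtain ⟨n, hn⟩ := mem_iUnion.1 hy
    exact 𝔰.fix_of_le (ht (n + 1)) (hs_succ n ▸ hfix (s n) y hn)
  have hxN : ∀ n, 𝔰.r (s n) x ∈ closure (𝔰.r (s n) '' N (s n)) := fun n =>
    closure_minimal (hSN _) isClosed_closure
      (image_closure_subset_closure_image (𝔰.r (s n)).continuous (mem_image_of_mem _ hxS))
  obtain ⟨c, hc, hcx⟩ := exists_mem_closure_iUnion_forall_eq
    (fun n => (𝔰.r (s n)).continuous) (fun n _ _ => 𝔰.eq_of_le (hs n.le_succ))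
    isClosed_closure.isCompact hxN
  have hct : 𝔰.r t c = 𝔰.r t x := hker (by rintro _ ⟨n, rfl⟩; exact hcx n)
  rw [closure_minimal hNt (𝔰.isClosed_fix t) hc, 𝔰.fix_of_le (ht 0) hs₀] at hct
  exact ⟨_, iUnion_subset fun n => hNS _, countable_iUnion fun n => hNc _, hct ▸ hc⟩

theorem separatesPoints_iSup_invariantAlgebra : (⨆ s, 𝔰.invariantAlgebra s).SeparatesPoints := by
  intro x y hxy
  obtain ⟨s, hs⟩ := 𝔰.exists_ne_of_ne hxy
  obtain ⟨ψ, hψx, hψy, -⟩ := exists_continuous_zero_one_of_isClosed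
    (isClosed_singleton (x := 𝔰.r s x)) (isClosed_singleton (x := 𝔰.r s y))
    (disjoint_singleton.2 hs)
  have hψ : ψ.comp (𝔰.r s) ∈ 𝔰.invariantAlgebra s :=
    𝔰.mem_invariantAlgebra.2 fun z => congrArg ψ (𝔰.isRetraction s z)
  refine ⟨_, ⟨_, le_iSup 𝔰.invariantAlgebra s hψ, rfl⟩, ?_⟩
  simp only [ContinuousMap.comp_apply, hψx rfl, hψy rfl]
  exact zero_ne_one

theorem exists_mem_invariantAlgebra (φ : C(K, ℝ)) : ∃ s, φ ∈ 𝔰.invariantAlgebra s := by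
  have hdense := ContinuousMap.subalgebra_topologicalClosure_eq_top_of_separatesPoints _
    𝔰.separatesPoints_iSup_invariantAlgebra
  have hφ : φ ∈ closure (⋃ s, (𝔰.invariantAlgebra s : Set C(K, ℝ))) := by
    rw [← Subalgebra.coe_iSup_of_directed 𝔰.invariantAlgebra_mono.directed_le,
      ← Subalgebra.topologicalClosure_coe, hdense]
    exact Algebra.mem_top
  obtain ⟨ψ, hψ, hlim⟩ := mem_closure_iff_seq_limit.1 hφ
  choose s hs using fun n => mem_iUnion.1 (hψ n)
  obtain ⟨t, ht⟩ := 𝔰.bddAbove_of_countable (countable_range s)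
  have hclosed : IsClosed {ψ : C(K, ℝ) | ψ.comp (𝔰.r t) = ψ} :=
    isClosed_eq (ContinuousMap.continuous_precomp _) continuous_id
  have hφt : φ.comp (𝔰.r t) = φ := hclosed.mem_of_tendsto hlim (Eventually.of_forall fun n =>
    𝔰.invariantAlgebra_mono (ht (mem_range_self n)) (hs n))
  exact ⟨t, 𝔰.mem_invariantAlgebra.2 fun x => DFunLike.congr_fun hφt x⟩

end RetractionalSkeleton

/-! ### Full retractional skeletons -/

theorem continuous_of_isClosed_rel {X Y : Type*} [TopologicalSpace X] [TopologicalSpace Y]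
    [CompactSpace Y] {f : X → Y} {p : X → Y → Prop} (hp : IsClosed {z : X × Y | p z.1 z.2})
    (hf : ∀ x y, p x y ↔ f x = y) : Continuous f := by
  refine continuous_iff_isClosed.2 fun T hT => ?_
  convert isClosedMap_fst_of_compactSpace _ (hp.inter (hT.preimage continuous_snd)) using 1
  ext x
  simp only [hf, mem_preimage, mem_image, mem_inter_iff, mem_ofPred_eq, Prod.exists,
    exists_and_right, exists_eq_right, exists_eq_left']

theorem countable_of_forall_isLowerSet {W : Type*} [LinearOrder W] [WellFoundedLT W] {J : Set W}
    (h : ∀ S, IsLowerSet S → ∃ Z ⊆ S, Z.Countable ∧ J ∩ S ⊆ ⋃ z ∈ Z, Iic z) : J.Countable := by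
  have hstep : ∀ S, IsLowerSet S → (∀ α ∈ S, (J ∩ Iic α).Countable) → (J ∩ S).Countable := by
    intro S hS hJS
    obtain ⟨Z, hZS, hZ, hJZ⟩ := h S hS
    refine (hZ.biUnion fun z hz => hJS z (hZS hz)).mono fun α hα => ?_
    obtain ⟨z, hz, hαz⟩ := mem_iUnion₂.1 (hJZ hα)
    exact mem_biUnion hz ⟨hα.1, hαz⟩
  have hIic : ∀ α, (J ∩ Iic α).Countable := fun α => by
    induction α using WellFoundedLT.induction with
    | ind α ih =>
      rw [← Iio_insert, insert_eq, inter_union_distrib_left]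
      exact ((countable_singleton α).mono inter_subset_right).union
        (hstep _ (isLowerSet_Iio α) ih)
  simpa only [inter_univ] using hstep univ isLowerSet_univ fun α _ => hIic α

theorem setoid_iInf_iff {α : Type*} {ι : Sort*} {E : ι → Setoid α} {x y : α} :
    (⨅ i, E i) x y ↔ ∀ i, E i x y := by
  rw [iInf, Setoid.sInf_iff, forall_mem_range]

section SigmaKernel

variable {K : Type u} [TopologicalSpace K]

/-- An equivalence relation is a `Σ`-kernel if it is the kernel of a continuous map into the
`Σ`-product of some family of lines. -/
def IsSigmaKernel (E : Setoid K) : Prop :=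
  ∃ (I : Type u) (F : K → I → ℝ), Continuous F ∧ (∀ x, (Function.support (F x)).Countable) ∧
    Setoid.ker F = E

theorem isSigmaKernel_ker [CompactSpace K] {X : Type*} [TopologicalSpace X] [T2Space X]
    {f : K → X} (hf : Continuous f) [MetrizableSpace (range f)] : IsSigmaKernel (Setoid.ker f) := by
  have := isCompact_iff_compactSpace.1 (isCompact_range hf)
  obtain ⟨g, hg⟩ := TopologicalSpace.exists_embedding_l_infty (range f)
  refine ⟨ULift ℕ, fun x n => g (rangeFactorization f x) n.down, ?_, fun x => to_countable _, ?_⟩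
  · have := hg.continuous
    fun_prop
  · ext x y
    have hxy : g (rangeFactorization f x) = g (rangeFactorization f y) ↔ f x = f y :=
      hg.injective.eq_iff.trans Subtype.ext_iff
    simp only [Setoid.ker_def, ← hxy, DFunLike.ext_iff, funext_iff, ULift.forall]

theorem isSigmaKernel_iInf {ι : Type u} [Countable ι] {E : ι → Setoid K}
    (hE : ∀ i, IsSigmaKernel (E i)) : IsSigmaKernel (⨅ i, E i) := by
  choose I F hF hsupp hker using hE
  refine ⟨Σ i, I i, fun x p => F p.1 x p.2, by fun_prop, fun x => ?_, ?_⟩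
  · refine (countable_iUnion fun i => (hsupp i x).image (Sigma.mk i)).mono ?_
    exact fun p hp => mem_iUnion.2 ⟨p.1, p.2, hp, rfl⟩
  · ext x y
    rw [Setoid.ker_def, funext_iff, Sigma.forall, setoid_iInf_iff]
    exact forall_congr' fun i => by rw [← hker i, Setoid.ker_def, funext_iff]

theorem IsSigmaKernel.isCorsonCompact [CompactSpace K] (h : IsSigmaKernel (⊥ : Setoid K)) :
    IsCorsonCompact K := by
  obtain ⟨I, F, hF, hsupp, hker⟩ := h
  refine ⟨I, range F, isCompact_range hF, forall_mem_range.2 hsupp, ⟨?_⟩⟩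
  exact (hF.isClosedEmbedding (Setoid.ker_eq_bot_iff.1 hker)).isEmbedding.toHomeomorph

/-- The coordinates of the `α`-th kernel enter through their increments over `P α`, and only
countably many of the increments at a point are nonzero. -/
theorem isSigmaKernel_inf_iInf {W : Type u} [Preorder W] [WellFoundedLT W] {E₀ : Setoid K}
    {E : W → Setoid K} {P : W → C(K, K)} (hE₀ : IsSigmaKernel E₀) (hE : ∀ α, IsSigmaKernel (E α))
    (hP : ∀ α, E₀ ⊓ ⨅ β ∈ Iio α, E β ≤ Setoid.ker (P α)) (hEP : ∀ α, E α ≤ Setoid.ker (P α))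
    (hJ : ∀ x, {α | ¬E α (P α x) x}.Countable) : IsSigmaKernel (E₀ ⊓ ⨅ α, E α) := by
  obtain ⟨I₀, F₀, hF₀, hsupp₀, hker₀⟩ := hE₀
  choose I F hF hsupp hker using hE
  let G : K → I₀ ⊕ (Σ α, I α) → ℝ := fun x =>
    Sum.elim (F₀ x) fun p => F p.1 x p.2 - F p.1 (P p.1 x) p.2
  have hG : ∀ x y, G x = G y ↔
      F₀ x = F₀ y ∧ ∀ α, F α x - F α (P α x) = F α y - F α (P α y) := fun x y => by
    simp only [G, funext_iff, Sum.forall, Sum.elim_inl, Sum.elim_inr, Sigma.forall, Pi.sub_apply]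
  refine ⟨_, G, ?_, fun x => ?_, ?_⟩
  · refine continuous_pi (Sum.rec (fun i => ?_) fun p => ?_)
    · exact (continuous_apply i).comp hF₀
    · have hFp := hF p.1
      simp only [G, Sum.elim_inr]
      fun_prop
  · have hsub := fun α => ((hsupp α x).union (hsupp α (P α x))).mono
      (Function.support_sub (F α x) (F α (P α x)))
    refine (((hsupp₀ x).image Sum.inl).union ((hJ x).biUnion fun α _ =>
      ((hsub α).image fun i => Sum.inr (⟨α, i⟩ : Σ α, I α)))).mono ?_
    rintro (i | ⟨α, i⟩) hi
    · exact Or.inl ⟨i, hi, rfl⟩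
    · refine Or.inr (mem_biUnion (fun hα : E α (P α x) x => hi ?_) ⟨i, hi, rfl⟩)
      rw [← hker α, Setoid.ker_def] at hα
      exact sub_eq_zero.2 (congrFun hα i).symm
  · ext x y
    rw [Setoid.ker_def, hG, Setoid.inf_iff_and, setoid_iInf_iff, ← hker₀, Setoid.ker_def]
    refine and_congr_right fun h₀ => ⟨fun h α => ?_, fun h α => ?_⟩
    · induction α using WellFoundedLT.induction with
      | ind α ih =>
        have hPα : P α x = P α y := hP α (Setoid.inf_iff_and.2 ⟨by rwa [← hker₀],
          setoid_iInf_iff.2 fun β => setoid_iInf_iff.2 (ih β)⟩)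
        have hα := h α
        rwa [hPα, sub_left_inj, ← Setoid.ker_def (f := F α), hker α] at hα
    · have hα := h α
      rw [← hker α, Setoid.ker_def] at hα
      rw [hα, show P α x = P α y from hEP α (h α)]

end SigmaKernel

/-- The set of values of `w` at the finite subsets of `Y`; for a monotone `w` it is directed. -/
def finsetHull {α β : Type*} (w : Finset α → β) (Y : Set α) : Set β :=
  w '' {F | (F : Set α) ⊆ Y}

section FinsetHull

variable {α β : Type*} {w : Finset α → β} {Y Z : Set α}

theorem finsetHull_mono (h : Y ⊆ Z) : finsetHull w Y ⊆ finsetHull w Z :=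
  image_mono fun _ hF => hF.trans h

theorem finsetHull_nonempty : (finsetHull w Y).Nonempty :=
  ⟨w ∅, mem_image_of_mem w (by simp)⟩

theorem directedOn_finsetHull [Preorder β] (hw : Monotone w) :
    DirectedOn (· ≤ ·) (finsetHull w Y) := by
  classical
  rintro _ ⟨F, hF, rfl⟩ _ ⟨G, hG, rfl⟩
  refine ⟨w (F ∪ G), mem_image_of_mem w ?_, hw Finset.subset_union_left,
    hw Finset.subset_union_right⟩
  rw [mem_ofPred_eq, Finset.coe_union]
  exact union_subset hF hG

theorem countable_finsetHull (hY : Y.Countable) : (finsetHull w Y).Countable := by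
  refine Countable.image (Countable.mono (fun F hF => ?_)
    ((countable_ofPred_finite_subset hY).preimage Finset.coe_injective)) w
  exact ⟨F.finite_toSet, hF⟩

theorem exists_countable_subset_finsetHull {Z : Set β} (hZ : Z.Countable)
    (hZY : Z ⊆ finsetHull w Y) : ∃ N ⊆ Y, N.Countable ∧ Z ⊆ finsetHull w N := by
  obtain ⟨𝓕, h𝓕, h𝓕c, rfl⟩ := exists_countable_subset_image_eq hZ hZY
  refine ⟨⋃ F ∈ 𝓕, (F : Set α), iUnion₂_subset h𝓕,
    h𝓕c.biUnion fun F _ => F.countable_toSet, image_mono fun F hF => ?_⟩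
  exact subset_biUnion_of_mem (u := fun F : Finset α => (F : Set α)) hF

theorem mem_finsetHull_empty_or_Iic {W : Type*} [LinearOrder W] {e : W → α} {S : Set W} {s : β}
    (hs : s ∈ finsetHull w (e '' S)) :
    s ∈ finsetHull w ∅ ∨ ∃ β ∈ S, s ∈ finsetHull w (e '' Iic β) := by
  classical
  obtain ⟨F, hF, rfl⟩ := hs
  obtain ⟨G, hG, rfl⟩ := Finset.subset_set_image_iff.1 hF
  rcases G.eq_empty_or_nonempty with rfl | hne
  · exact Or.inl (mem_image_of_mem w (by simp))
  · refine Or.inr ⟨G.max' hne, hG (G.max'_mem hne), mem_image_of_mem w ?_⟩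
    rw [mem_ofPred_eq, Finset.coe_image]
    exact image_mono fun a ha => G.le_max' a ha

end FinsetHull

namespace RetractionalSkeleton

variable {K : Type u} [TopologicalSpace K] (𝔰 : RetractionalSkeleton K)

/-- The closed set onto which the limit of the retractions with index in a directed set `A`
retracts, see `exists_limitRetraction`. -/
def rangeClosure (A : Set 𝔰.Γ) : Set K := closure (⋃ s ∈ A, range (𝔰.r s))

variable {𝔰} {A B : Set 𝔰.Γ} {x y : K}

theorem rangeClosure_mono (h : A ⊆ B) : 𝔰.rangeClosure A ⊆ 𝔰.rangeClosure B :=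
  closure_mono (biUnion_subset_biUnion_left h)

variable (𝔰) in
theorem kerOn_anti (h : A ⊆ B) : 𝔰.kerOn B ≤ 𝔰.kerOn A := fun _ _ hxy s hs => hxy s (h hs)

theorem fix_of_mem_rangeClosure [T2Space K] {t : 𝔰.Γ} (ht : ∀ s ∈ A, s ≤ t)
    (hx : x ∈ 𝔰.rangeClosure A) : 𝔰.r t x = x := by
  refine closure_minimal (iUnion₂_subset fun s hs => ?_) (𝔰.isClosed_fix t) hx
  rintro _ ⟨y, rfl⟩
  exact 𝔰.fix_of_le (ht s hs) (𝔰.isRetraction s y)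

variable [CompactSpace K] [T2Space K]

theorem isSigmaKernel_kerOn_of_countable (hA : A.Countable) : IsSigmaKernel (𝔰.kerOn A) := by
  have := hA.to_subtype
  have := 𝔰.metrizable
  convert isSigmaKernel_iInf fun s : A => isSigmaKernel_ker (𝔰.r s).continuous
  ext x y
  rw [setoid_iInf_iff, Subtype.forall]
  rfl

theorem exists_mem_rangeClosure (hA : DirectedOn (· ≤ ·) A) (hne : A.Nonempty) (x : K) :
    ∃ y ∈ 𝔰.rangeClosure A, 𝔰.kerOn A y x := by
  have := hne.to_subtype
  have hclosed : ∀ s : A, IsClosed (𝔰.rangeClosure A ∩ {y | 𝔰.r s y = 𝔰.r s x}) := fun s =>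
    isClosed_closure.inter (isClosed_eq (by fun_prop) continuous_const)
  obtain ⟨y, hy⟩ := IsCompact.nonempty_iInter_of_directed_nonempty_isCompact_isClosed
    (fun s : A => 𝔰.rangeClosure A ∩ {y | 𝔰.r s y = 𝔰.r s x})
    (fun s t => by
      obtain ⟨w, hw, hsw, htw⟩ := hA s s.2 t t.2
      exact ⟨⟨w, hw⟩, fun y hy => ⟨hy.1, 𝔰.eq_of_le hsw hy.2⟩,
        fun y hy => ⟨hy.1, 𝔰.eq_of_le htw hy.2⟩⟩)
    (fun s => ⟨𝔰.r s x, subset_closure (mem_biUnion s.2 (mem_range_self x)), 𝔰.isRetraction s x⟩)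
    (fun s => (hclosed s).isCompact) hclosed
  rw [mem_iInter] at hy
  exact ⟨y, (hy (Classical.arbitrary A)).1, fun s hs => (hy ⟨s, hs⟩).2⟩

variable (hD : 𝔰.inducedSet = univ)
include hD

theorem exists_countable_mem_rangeClosure (hx : x ∈ 𝔰.rangeClosure A) :
    ∃ Z ⊆ A, Z.Countable ∧ x ∈ 𝔰.rangeClosure Z := by
  obtain ⟨N, hNA, hN, hxN⟩ := 𝔰.exists_countable_mem_closure (hD ▸ subset_univ _)
    (hD ▸ mem_univ x) hx
  choose! s hsA hs using fun y (hy : y ∈ N) => mem_iUnion₂.1 (hNA hy)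
  refine ⟨s '' N, image_subset_iff.2 hsA, hN.image s, closure_mono (fun y hy => ?_) hxN⟩
  exact mem_biUnion (mem_image_of_mem s hy) (hs y hy)

theorem eq_of_mem_rangeClosure (hA : DirectedOn (· ≤ ·) A) (hne : A.Nonempty)
    (hx : x ∈ 𝔰.rangeClosure A) (hy : y ∈ 𝔰.rangeClosure A) (h : 𝔰.kerOn A x y) : x = y := by
  obtain ⟨Z, hZA, hZ, hxZ⟩ := exists_countable_mem_rangeClosure hD hx
  obtain ⟨Z', hZ'A, hZ', hyZ'⟩ := exists_countable_mem_rangeClosure hD hy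
  obtain ⟨t, ht, hker⟩ :=
    𝔰.exists_upperBound_of_directedOn hA hne (union_subset hZA hZ'A) (hZ.union hZ')
  have hxt := fix_of_mem_rangeClosure (fun s hs => ht s (Or.inl hs)) hxZ
  have hyt := fix_of_mem_rangeClosure (fun s hs => ht s (Or.inr hs)) hyZ'
  rw [← hxt, ← hyt]
  exact hker h

theorem exists_limitRetraction (hA : DirectedOn (· ≤ ·) A) (hne : A.Nonempty) :
    ∃ R : C(K, K), ∀ x y, y ∈ 𝔰.rangeClosure A ∧ 𝔰.kerOn A y x ↔ R x = y := by
  choose R hR hRx using exists_mem_rangeClosure hA hne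
  have hgraph : ∀ x y, y ∈ 𝔰.rangeClosure A ∧ 𝔰.kerOn A y x ↔ R x = y := fun x y =>
    ⟨fun hy => eq_of_mem_rangeClosure hD hA hne (hR x) hy.1
      ((𝔰.kerOn A).trans (hRx x) ((𝔰.kerOn A).symm hy.2)), by rintro rfl; exact ⟨hR x, hRx x⟩⟩
  refine ⟨⟨R, continuous_of_isClosed_rel ?_ hgraph⟩, hgraph⟩
  have hker : IsClosed {z : K × K | ∀ s ∈ A, 𝔰.r s z.2 = 𝔰.r s z.1} := by
    simp only [ofPred_forall]
    exact isClosed_biInter fun s _ => isClosed_eq (by fun_prop) (by fun_prop)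
  exact (isClosed_closure.preimage continuous_snd).inter hker

theorem countable_jumps {w : Finset 𝔰.Γ → 𝔰.Γ} (hw : Monotone w) {W : Type*} [LinearOrder W]
    [WellFoundedLT W] {e : W → 𝔰.Γ} {P : W → C(K, K)}
    (hP : ∀ α x y, y ∈ 𝔰.rangeClosure (finsetHull w (e '' Iio α)) ∧
      𝔰.kerOn (finsetHull w (e '' Iio α)) y x ↔ P α x = y) (x : K) :
    {α | ¬𝔰.kerOn (finsetHull w (e '' Iic α)) (P α x) x}.Countable := by
  refine countable_of_forall_isLowerSet fun S hS => ?_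
  obtain ⟨y, hy, hyx⟩ :=
    exists_mem_rangeClosure (directedOn_finsetHull (Y := e '' S) hw) finsetHull_nonempty x
  obtain ⟨A, hAS, hA, hyA⟩ := exists_countable_mem_rangeClosure hD hy
  obtain ⟨Y, hYS, hY, hAY⟩ := exists_countable_subset_finsetHull hA hAS
  obtain ⟨Z, hZS, hZ, rfl⟩ := exists_countable_subset_image_eq hY hYS
  refine ⟨Z, hZS, hZ, fun α ⟨hα, hαS⟩ => ?_⟩
  by_contra hαZ
  have hZα : Z ⊆ Iio α := fun z hz => not_le.1 fun h => hαZ (mem_biUnion hz h)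
  have hαS' : Iic α ⊆ S := fun β hβ => hS hβ hαS
  have hPy : P α x = y := (hP α x y).1
    ⟨rangeClosure_mono (hAY.trans (finsetHull_mono (image_mono hZα))) hyA,
      𝔰.kerOn_anti (finsetHull_mono (image_mono (Iio_subset_Iic_self.trans hαS'))) hyx⟩
  exact hα (hPy ▸ 𝔰.kerOn_anti (finsetHull_mono (image_mono hαS')) hyx)

theorem isSigmaKernel_kerOn_of_Iic {w : Finset 𝔰.Γ → 𝔰.Γ} (hw : Monotone w) {W : Type u}
    [LinearOrder W] [WellFoundedLT W] {e : W → 𝔰.Γ}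
    (h : ∀ α, IsSigmaKernel (𝔰.kerOn (finsetHull w (e '' Iic α)))) :
    IsSigmaKernel (𝔰.kerOn (finsetHull w (range e))) := by
  have hglue : ∀ S : Set W, 𝔰.kerOn (finsetHull w ∅) ⊓
      ⨅ α ∈ S, 𝔰.kerOn (finsetHull w (e '' Iic α)) ≤ 𝔰.kerOn (finsetHull w (e '' S)) := by
    intro S x y hxy s hs
    simp only [Setoid.inf_iff_and, setoid_iInf_iff] at hxy
    rcases mem_finsetHull_empty_or_Iic hs with hs | ⟨α, hα, hs⟩
    · exact hxy.1 s hs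
    · exact hxy.2 α hα s hs
  choose P hP using fun α => exists_limitRetraction hD
    (directedOn_finsetHull (Y := e '' Iio α) hw) finsetHull_nonempty
  have hPker : ∀ α, 𝔰.kerOn (finsetHull w (e '' Iio α)) ≤ Setoid.ker (P α) := fun α x y hxy =>
    have hy := (hP α y _).2 rfl
    (hP α x _).1 ⟨hy.1, (𝔰.kerOn _).trans hy.2 ((𝔰.kerOn _).symm hxy)⟩
  convert isSigmaKernel_inf_iInf (isSigmaKernel_kerOn_of_countable
    (countable_finsetHull (w := w) countable_empty)) h (fun α => (hglue (Iio α)).trans (hPker α))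
    (fun α => (𝔰.kerOn_anti (finsetHull_mono (image_mono Iio_subset_Iic_self))).trans (hPker α))
    (countable_jumps hD hw hP)
  refine le_antisymm (le_inf (𝔰.kerOn_anti (finsetHull_mono (empty_subset _)))
    (le_iInf fun α => 𝔰.kerOn_anti (finsetHull_mono (image_subset_range e _)))) ?_
  simpa only [mem_univ, iInf_pos, image_univ] using hglue univ

theorem isSigmaKernel_kerOn {w : Finset 𝔰.Γ → 𝔰.Γ} (hw : Monotone w) (Y : Set 𝔰.Γ) :
    IsSigmaKernel (𝔰.kerOn (finsetHull w Y)) := by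
  induction hκ : Cardinal.mk Y using WellFoundedLT.induction generalizing Y with
  | ind κ ih =>
  by_cases hY : Y.Countable
  · exact isSigmaKernel_kerOn_of_countable (countable_finsetHull hY)
  have hκ₀ : Cardinal.aleph0 ≤ κ :=
    hκ ▸ (not_le.1 fun h => hY (Cardinal.le_aleph0_iff_set_countable.1 h)).le
  obtain ⟨e⟩ : Nonempty (κ.ord.ToType ≃ Y) :=
    Cardinal.eq.1 ((Cardinal.mk_ord_toType κ).trans hκ.symm)
  have hlt : ∀ α : κ.ord.ToType, Cardinal.mk (Iic α) < κ := fun α => by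
    simpa only [Cardinal.mk_ord_toType] using
      Cardinal.mk_Iic_lt α (by simp) (by rwa [Cardinal.mk_ord_toType])
  have hrange : range (fun α => (e α : 𝔰.Γ)) = Y := by
    rw [range_comp' Subtype.val e, e.range_eq_univ, image_univ, Subtype.range_coe]
  rw [← hrange]
  exact isSigmaKernel_kerOn_of_Iic hD hw fun α =>
    ih _ (Cardinal.mk_image_le.trans_lt (hlt α)) _ rfl

theorem isCorsonCompact_of_inducedSet_eq_univ : IsCorsonCompact K := by
  obtain ⟨w, hw, hle⟩ := exists_monotone_finset_upperBound 𝔰.Γ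
  have hbot : 𝔰.kerOn (finsetHull w univ) = ⊥ := by
    refine eq_bot_iff.2 fun x y hxy => not_not.1 fun hne => ?_
    obtain ⟨s, hs⟩ := 𝔰.exists_ne_of_ne hne
    exact hs (𝔰.eq_of_le (hle {s} s (Finset.mem_singleton_self s))
      (hxy _ (mem_image_of_mem w (subset_univ _))))
  exact (hbot ▸ isSigmaKernel_kerOn hD hw univ).isCorsonCompact

end RetractionalSkeleton

/-! ### Copies of `[0, ω₁)` -/

section OmegaOneCopy

open Order

open scoped Ordinal

/-- The points `X ξ`, `ξ < ω₁`, behave like the points of `[0, ω₁)`: they depend continuously on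
`ξ`, and each initial segment `[0, ξ]` is separated from the rest by a continuous function on the
whole space. -/
structure IsOmegaOneCopy {K : Type u} [TopologicalSpace K] (X : Ordinal.{0} → K) : Prop where
  continuousOn : ContinuousOn X (Iio ω₁)
  exists_cut : ∀ ξ < ω₁, ∃ φ : C(K, ℝ), (∀ η ≤ ξ, φ (X η) = 0) ∧ ∀ η ∈ Ioo ξ ω₁, φ (X η) = 1

theorem countable_Iio_of_lt_omega_one {ξ : Ordinal.{0}} (h : ξ < ω₁) : (Iio ξ).Countable := by
  rw [← Cardinal.le_aleph0_iff_set_countable, Cardinal.mk_Iio_ordinal]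
  rw [Cardinal.lt_omega_iff_card_lt, Cardinal.lt_aleph_one_iff] at h
  exact Cardinal.lift_le_aleph0.2 h

theorem add_one_lt_omega_one {ξ : Ordinal.{0}} (h : ξ < ω₁) : ξ + 1 < ω₁ :=
  (Cardinal.isSuccLimit_omega 1).add_one_lt h

namespace RetractionalSkeleton

variable {K : Type u} [TopologicalSpace K] [T2Space K] (𝔰 : RetractionalSkeleton K)

theorem exists_forall_ge_ne {x : K} (hx : x ∉ 𝔰.inducedSet) (s : 𝔰.Γ) :
    ∃ t, s ≤ t ∧ ∀ v, t ≤ v → 𝔰.r v x ≠ 𝔰.r s x := by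
  obtain ⟨t, ht⟩ := 𝔰.exists_ne_of_ne fun h => hx (𝔰.mem_inducedSet.2 ⟨s, h⟩)
  obtain ⟨u, hsu, htu⟩ := 𝔰.directed s t
  refine ⟨u, hsu, fun v huv h => ht ?_⟩
  rw [← h, (𝔰.comp_eq_of_le t v (htu.trans huv) x).1]

theorem exists_continuous_chain {next : 𝔰.Γ → 𝔰.Γ} (hnext : ∀ s, s ≤ next s) :
    ∃ c : Ordinal.{0} → 𝔰.Γ, ∀ ξ < ω₁, (∀ η < ξ, next (c η) ≤ c ξ) ∧
      (IsSuccLimit ξ → 𝔰.kerOn (c '' Iio ξ) ≤ Setoid.ker (𝔰.r (c ξ))) := by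
  choose! sup hsup using fun A (hA : DirectedOn (· ≤ ·) A ∧ A.Nonempty ∧ A.Countable) =>
    𝔰.exists_upperBound_of_directedOn hA.1 hA.2.1 subset_rfl hA.2.2
  let c : Ordinal.{0} → 𝔰.Γ := WellFounded.fix wellFounded_lt fun ξ c =>
    sup (range fun η : Iio ξ => next (c η η.2))
  have hc : ∀ ξ, c ξ = sup ((fun η => next (c η)) '' Iio ξ) := fun ξ => by
    rw [image_eq_range]
    exact WellFounded.fix_eq _ _ ξ
  have hmain : ∀ ξ < ω₁, (Iio ξ).Nonempty → (∀ η < ξ, next (c η) ≤ c ξ) ∧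
      𝔰.kerOn ((fun η => next (c η)) '' Iio ξ) ≤ Setoid.ker (𝔰.r (c ξ)) := fun ξ => by
    induction ξ using WellFoundedLT.induction with
    | ind ξ ih =>
      intro hξ hne
      have hmono : MonotoneOn (fun η => next (c η)) (Iio ξ) := fun η _ ζ hζ hηζ => by
        rcases hηζ.eq_or_lt with rfl | hηζ
        · exact le_rfl
        · exact ((ih ζ hζ (hζ.trans hξ) ⟨η, hηζ⟩).1 η hηζ).trans (hnext _)
      obtain ⟨hle, hker⟩ := hsup ((fun η => next (c η)) '' Iio ξ)
        ⟨directedOn_image.2 ((DirectedOn.of_linearOrder _).mono' hmono), hne.image _,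
          (countable_Iio_of_lt_omega_one hξ).image _⟩
      exact hc ξ ▸ ⟨forall_mem_image.1 hle, hker⟩
  refine ⟨c, fun ξ hξ => ⟨fun η hη => (hmain ξ hξ ⟨η, hη⟩).1 η hη,
    fun hlim x y hxy => (hmain ξ hξ hlim.nonempty_Iio).2 ?_⟩⟩
  rintro _ ⟨η, hη, rfl⟩
  have hη' : η + 1 < ξ := hlim.add_one_lt hη
  exact 𝔰.eq_of_le ((hmain _ (hη'.trans hξ) ⟨η, lt_add_one η⟩).1 η (lt_add_one η))
    (hxy _ (mem_image_of_mem c hη'))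

/-- The values of the retractions at `x` change at every step of the chain `c`, and the chain is
continuous at limits. -/
structure IsJumpChain (c : Ordinal.{0} → 𝔰.Γ) (x : K) : Prop where
  monotoneOn : MonotoneOn c (Iio ω₁)
  ker_le : ∀ ξ < ω₁, IsSuccLimit ξ → 𝔰.kerOn (c '' Iio ξ) ≤ Setoid.ker (𝔰.r (c ξ))
  ne : ∀ ξ < ω₁, 𝔰.r (c (ξ + 1)) x ≠ 𝔰.r (c ξ) x

theorem exists_isJumpChain {x : K} (hx : x ∉ 𝔰.inducedSet) :
    ∃ c : Ordinal.{0} → 𝔰.Γ, 𝔰.IsJumpChain c x := by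
  choose next hnext hne using 𝔰.exists_forall_ge_ne hx
  obtain ⟨c, hc⟩ := 𝔰.exists_continuous_chain hnext
  refine ⟨c, fun η _ ξ hξ hηξ => ?_, fun ξ hξ => (hc ξ hξ).2, fun ξ hξ =>
    hne _ _ ((hc _ (add_one_lt_omega_one hξ)).1 ξ (lt_add_one ξ))⟩
  rcases hηξ.eq_or_lt with rfl | hηξ
  · exact le_rfl
  · exact (hnext _).trans ((hc _ hξ).1 η hηξ)

variable {𝔰} {c : Ordinal.{0} → 𝔰.Γ} {x : K} (hc : 𝔰.IsJumpChain c x)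
include hc

theorem IsJumpChain.continuousAt [CompactSpace K] {ξ : Ordinal.{0}} (hξ : ξ < ω₁) :
    ContinuousAt (fun ξ => 𝔰.r (c ξ) x) ξ := by
  by_cases hlim : IsSuccLimit ξ
  swap
  · rw [ContinuousAt, SuccOrder.nhds_eq_pure.2 hlim]
    exact tendsto_pure_nhds _ _
  refine tendsto_nhds_of_unique_mapClusterPt fun d hd => ?_
  have hle : ∀ᶠ η in 𝓝 ξ, η ≤ ξ := by
    filter_upwards [Iio_mem_nhds (lt_add_one ξ)] with η hη using Order.lt_add_one_iff.1 hη
  have hfix : 𝔰.r (c ξ) d = d := by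
    refine (𝔰.isClosed_fix (c ξ)).mem_of_mapClusterPt hd ?_
    filter_upwards [hle] with η hη
    exact (𝔰.comp_eq_of_le _ _ (hc.monotoneOn (hη.trans_lt hξ) hξ hη) x).2
  rw [← hfix]
  refine hc.ker_le ξ hξ hlim ?_
  rintro _ ⟨η, hη, rfl⟩
  have hclosed : IsClosed {z | 𝔰.r (c η) z = 𝔰.r (c η) x} :=
    isClosed_eq (by fun_prop) continuous_const
  refine hclosed.mem_of_mapClusterPt hd ?_
  filter_upwards [hle, Ioi_mem_nhds hη] with ζ hζ hηζ
  exact (𝔰.comp_eq_of_le _ _ (hc.monotoneOn (hη.trans hξ) (hζ.trans_lt hξ) (le_of_lt hηζ)) x).1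

theorem IsJumpChain.exists_cut [CompactSpace K] {ξ : Ordinal.{0}} (hξ : ξ < ω₁) :
    ∃ φ : C(K, ℝ), (∀ η ≤ ξ, φ (𝔰.r (c η) x) = 0) ∧ ∀ η ∈ Ioo ξ ω₁, φ (𝔰.r (c η) x) = 1 := by
  have hξ' : ξ + 1 < ω₁ := add_one_lt_omega_one hξ
  let f : K → K × K := fun z => (𝔰.r (c ξ) z, 𝔰.r (c (ξ + 1)) z)
  have hf : Continuous f := by fun_prop
  have hdisj : Disjoint {z | f z = (z, z)} {z | f z = f x} := by
    refine disjoint_left.2 fun z hz hzx => hc.ne ξ hξ ?_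
    rw [mem_ofPred_eq, hz, Prod.ext_iff] at hzx
    exact hzx.2.symm.trans hzx.1
  obtain ⟨φ, hφ₀, hφ₁, -⟩ := exists_continuous_zero_one_of_isClosed
    (isClosed_eq hf (by fun_prop)) (isClosed_eq hf continuous_const) hdisj
  refine ⟨φ, fun η hη => hφ₀ (Prod.ext ?_ ?_), fun η hη => hφ₁ (Prod.ext ?_ ?_)⟩
  · exact (𝔰.comp_eq_of_le _ _ (hc.monotoneOn (hη.trans_lt hξ) hξ hη) x).2
  · have hη' : η ≤ ξ + 1 := hη.trans (lt_add_one ξ).le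
    exact (𝔰.comp_eq_of_le _ _ (hc.monotoneOn (hη.trans_lt hξ) hξ' hη') x).2
  · exact (𝔰.comp_eq_of_le _ _ (hc.monotoneOn hξ hη.2 hη.1.le) x).1
  · exact (𝔰.comp_eq_of_le _ _ (hc.monotoneOn hξ' hη.2 (Order.add_one_le_of_lt hη.1)) x).1

omit hc in
theorem exists_isOmegaOneCopy [CompactSpace K] (h : 𝔰.inducedSet ≠ univ) :
    ∃ X : Ordinal.{0} → K, IsOmegaOneCopy X := by
  obtain ⟨x, hx⟩ := (ne_univ_iff_exists_notMem _).1 h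
  obtain ⟨c, hc⟩ := 𝔰.exists_isJumpChain hx
  exact ⟨fun ξ => 𝔰.r (c ξ) x, fun ξ hξ => (hc.continuousAt hξ).continuousWithinAt,
    fun ξ hξ => hc.exists_cut hξ⟩

end RetractionalSkeleton

end OmegaOneCopy

/-! ### Gluing pairs of points -/

section Glued

namespace RetractionalSkeleton

variable {L : Type u} [TopologicalSpace L] [CompactSpace L] [T2Space L]
  (𝔰 : RetractionalSkeleton L)

theorem exists_forall_ge_apply_eq {g : L → ℝ} {l k : L} (hg : ContinuousOn g {l}ᶜ) (hk : k ≠ l) :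
    ∃ s, ∀ t, s ≤ t → g (𝔰.r t k) = g k := by
  obtain ⟨h, hhl, hhk, -⟩ := exists_tsupport_one_of_isOpen_isClosed isOpen_compl_singleton
    isClosed_closure.isCompact isClosed_singleton (singleton_subset_iff.2 hk)
  have hhk : h k = 1 := hhk rfl
  have hhg : Continuous fun x => h x * g x :=
    (h.continuous.continuousOn.mul hg).continuous_of_tsupport_subset isOpen_compl_singleton
      (tsupport_mul_subset_left.trans hhl)
  obtain ⟨s, hs⟩ := 𝔰.exists_mem_invariantAlgebra h
  obtain ⟨t, ht⟩ := 𝔰.exists_mem_invariantAlgebra ⟨_, hhg⟩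
  obtain ⟨u, hsu, htu⟩ := 𝔰.directed s t
  refine ⟨u, fun v huv => ?_⟩
  have hv := 𝔰.mem_invariantAlgebra.1 (𝔰.invariantAlgebra_mono (hsu.trans huv) hs) k
  have hv' := 𝔰.mem_invariantAlgebra.1 (𝔰.invariantAlgebra_mono (htu.trans huv) ht) k
  simpa [hv, hhk] using hv'

theorem mem_inducedSet_of_continuousOn_compl {g : L → ℝ} {l : L} (hg : ContinuousOn g {l}ᶜ)
    {A B : Set L} (hA : A.Countable) (hB : B.Countable) (hlA : l ∈ closure A) (hlB : l ∈ closure B)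
    (hgA : ∀ k ∈ A, k ≠ l ∧ g k = 0) (hgB : ∀ k ∈ B, k ≠ l ∧ g k = 1) : l ∈ 𝔰.inducedSet := by
  choose! s hs using fun k (hk : k ≠ l) => 𝔰.exists_forall_ge_apply_eq hg hk
  obtain ⟨t, ht⟩ := 𝔰.bddAbove_of_countable ((hA.union hB).image s)
  refine 𝔰.mem_inducedSet.2 ⟨t, by_contra fun hne => zero_ne_one (α := ℝ) ?_⟩
  have hcont : ContinuousAt (fun k => g (𝔰.r t k)) l :=
    (hg.continuousAt (isOpen_compl_singleton.mem_nhds hne)).comp (𝔰.r t).continuous.continuousAt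
  have hclosure {C : Set L} {a : ℝ} (hCAB : C ⊆ A ∪ B) (hlC : l ∈ closure C)
      (hgC : ∀ k ∈ C, k ≠ l ∧ g k = a) : g (𝔰.r t l) = a := by
    refine closure_singleton.subset (closure_mono ?_ (mem_closure_image
      (f := fun k => g (𝔰.r t k)) hcont hlC))
    rintro _ ⟨k, hk, rfl⟩
    exact (hs k (hgC k hk).1 t (ht (mem_image_of_mem s (hCAB hk)))).trans (hgC k hk).2
  rw [← hclosure subset_union_left hlA hgA, ← hclosure subset_union_right hlB hgB]

end RetractionalSkeleton

variable {K : Type u} [TopologicalSpace K]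

/-- The algebra of continuous functions taking the same value at the two points of each pair
in `P`. -/
def gluingAlgebra (P : Set (K × K)) : Subalgebra ℝ C(K, ℝ) where
  carrier := {φ | ∀ p ∈ P, φ p.1 = φ p.2}
  mul_mem' hφ hψ p hp := by simp only [ContinuousMap.mul_apply, hφ p hp, hψ p hp]
  add_mem' hφ hψ p hp := by simp only [ContinuousMap.add_apply, hφ p hp, hψ p hp]
  algebraMap_mem' _ _ _ := rfl

/-- The largest completely regular Hausdorff quotient of `K` in which the two points of each pair
in `P` coincide, encoded as the image of `K` under the joint evaluation of the functions in
`gluingAlgebra P`. -/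
abbrev Glued (P : Set (K × K)) : Type u :=
  range fun (k : K) (φ : gluingAlgebra P) => φ.1 k

namespace Glued

variable (P : Set (K × K))

/-- The quotient map onto `Glued P`. -/
def mk : C(K, Glued P) where
  toFun := rangeFactorization _
  continuous_toFun := (continuous_pi fun φ => φ.1.continuous).subtype_mk _

theorem mk_surjective : Function.Surjective (mk P) := rangeFactorization_surjective

instance [CompactSpace K] : CompactSpace (Glued P) :=
  (mk_surjective P).compactSpace (mk P).continuous

variable {P}

theorem mk_eq_mk {k k' : K} : mk P k = mk P k' ↔ ∀ φ ∈ gluingAlgebra P, φ k = φ k' := by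
  rw [Subtype.ext_iff, funext_iff, Subtype.forall]
  rfl

/-- The function on `Glued P` induced by a function that respects the gluing. -/
def lift (φ : gluingAlgebra P) : C(Glued P, ℝ) where
  toFun z := z.1 φ
  continuous_toFun := (continuous_apply φ).comp continuous_subtype_val

@[simp]
theorem lift_mk (φ : gluingAlgebra P) (k : K) : lift φ (mk P k) = φ.1 k := rfl

theorem exists_mem_gluingAlgebra_mul {a b : K} {g : C(K, ℝ)}
    (hg : ∀ p ∈ P, p ≠ (a, b) → g p.1 = g p.2) {k : K} (hk : mk P k ≠ mk P a) :
    ∃ ψ χ : gluingAlgebra P, ψ.1 k ≠ 0 ∧ χ.1 = ψ.1 * g := by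
  obtain ⟨φ, hφ, hne⟩ : ∃ φ ∈ gluingAlgebra P, φ k ≠ φ a := by simpa [mk_eq_mk] using hk
  let ψ : gluingAlgebra P := ⟨φ, hφ⟩ - algebraMap ℝ _ (φ a)
  have hψa : ψ.1 a = 0 := sub_self _
  refine ⟨ψ, ⟨ψ.1 * g, fun p hp => ?_⟩, sub_ne_zero.2 hne, rfl⟩
  rw [ContinuousMap.mul_apply, ContinuousMap.mul_apply, ← ψ.2 p hp]
  by_cases hpab : p = (a, b)
  · rw [hpab, hψa, zero_mul, zero_mul]
  · rw [hg p hp hpab]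

theorem exists_continuousOn_compl {a b : K} {g : C(K, ℝ)}
    (hg : ∀ p ∈ P, p ≠ (a, b) → g p.1 = g p.2) :
    ∃ g' : Glued P → ℝ, ContinuousOn g' {mk P a}ᶜ ∧ ∀ k, mk P k ≠ mk P a → g' (mk P k) = g k := by
  let σ := Function.surjInv (mk_surjective P)
  have hσ : ∀ z, mk P (σ z) = z := Function.surjInv_eq (mk_surjective P)
  have hdiv : ∀ z ≠ mk P a, ∃ φ ψ : C(Glued P, ℝ), ψ z ≠ 0 ∧
      ∀ k, ψ (mk P k) ≠ 0 → φ (mk P k) / ψ (mk P k) = g k := by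
    intro z hz
    obtain ⟨k, rfl⟩ := mk_surjective P z
    obtain ⟨ψ, χ, hψ, hχ⟩ := exists_mem_gluingAlgebra_mul hg hz
    refine ⟨lift χ, lift ψ, hψ, fun k' hk' => ?_⟩
    rw [lift_mk, hχ]
    exact mul_div_cancel_left₀ _ hk'
  refine ⟨fun z => g (σ z), fun z hz => ContinuousAt.continuousWithinAt ?_, fun k hk => ?_⟩
  · obtain ⟨φ, ψ, hψ, hdiv⟩ := hdiv z hz
    refine (φ.continuous.continuousAt.div₀ ψ.continuous.continuousAt hψ).congr ?_
    filter_upwards [ψ.continuous.continuousAt.eventually_ne hψ] with y hy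
    simpa only [hσ] using hdiv (σ y) (by rwa [hσ])
  · obtain ⟨φ, ψ, hψ, hdiv⟩ := hdiv _ hk
    have hdivσ := hdiv (σ (mk P k)) (by rwa [hσ])
    rw [hσ, hdiv k hψ] at hdivσ
    exact hdivσ.symm

end Glued

end Glued

/-! ### An image without a retractional skeleton -/

section BlockGluing

open Order

open scoped Ordinal

/-- The ordinals are divided into consecutive blocks of order type `ω + ω`; this is the first point
of the block with number `α`. -/
noncomputable def blockStart (α : Ordinal.{0}) : Ordinal.{0} := (ω + ω) * α

/-- The limit ordinal in the middle of the block with number `α`. -/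
noncomputable def blockMid (α : Ordinal.{0}) : Ordinal.{0} := blockStart α + ω

theorem isNormal_blockStart : IsNormal blockStart :=
  Ordinal.isNormal_mul_right (Ordinal.omega0_pos.trans_le le_self_add)

theorem blockStart_add_one (α : Ordinal.{0}) : blockStart (α + 1) = blockMid α + ω := by
  simp only [blockStart, blockMid, mul_add_one, add_assoc]

theorem blockStart_lt_blockMid_iff {α β : Ordinal.{0}} : blockStart α < blockMid β ↔ α ≤ β := by
  refine ⟨fun h => ?_, fun h => ?_⟩
  · refine Order.lt_add_one_iff.1 (isNormal_blockStart.strictMono.lt_iff_lt.1 (h.trans_le ?_))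
    rw [blockStart_add_one]
    exact le_self_add
  · exact (isNormal_blockStart.strictMono.monotone h).trans_lt
      (lt_add_of_pos_right _ Ordinal.omega0_pos)

theorem blockMid_lt_blockStart_iff {α β : Ordinal.{0}} : blockMid α < blockStart β ↔ α < β := by
  refine ⟨fun h => not_le.1 fun hβα => h.asymm (blockStart_lt_blockMid_iff.2 hβα), fun h => ?_⟩
  refine lt_of_lt_of_le ?_ (isNormal_blockStart.strictMono.monotone (Order.add_one_le_of_lt h))
  rw [blockStart_add_one]
  exact lt_add_of_pos_right _ Ordinal.omega0_pos

theorem blockMid_le_blockStart_iff {α β : Ordinal.{0}} : blockMid α ≤ blockStart β ↔ α < β := by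
  rw [← not_lt, blockStart_lt_blockMid_iff, not_le]

theorem strictMono_blockMid : StrictMono blockMid := fun _ _ h =>
  (blockMid_lt_blockStart_iff.2 h).trans (blockStart_lt_blockMid_iff.2 le_rfl)

theorem blockMid_notMem_Ioc (α β : Ordinal.{0}) :
    blockMid β ∉ Ioc (blockMid α) (blockStart (α + 1)) := fun h =>
  (strictMono_blockMid.lt_iff_lt.1 h.1).not_ge
    (Order.lt_add_one_iff.1 (blockMid_le_blockStart_iff.1 h.2))

theorem blockStart_mem_Ioc_iff {α β : Ordinal.{0}} :
    blockStart β ∈ Ioc (blockMid α) (blockStart (α + 1)) ↔ β = α + 1 := by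
  rw [mem_Ioc, blockMid_lt_blockStart_iff, isNormal_blockStart.strictMono.le_iff_le,
    ← Order.add_one_le_iff, le_antisymm_iff, and_comm]

theorem blockStart_lt_omega_one {α : Ordinal.{0}} (h : α < ω₁) : blockStart α < ω₁ :=
  Ordinal.isPrincipal_mul_omega 1 (Ordinal.isPrincipal_add_omega 1 Ordinal.omega0_lt_omega_one
    Ordinal.omega0_lt_omega_one) h

theorem blockMid_lt_omega_one {α : Ordinal.{0}} (h : α < ω₁) : blockMid α < ω₁ :=
  Ordinal.isPrincipal_add_omega 1 (blockStart_lt_omega_one h) Ordinal.omega0_lt_omega_one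

theorem exists_lt_omega_one_of_countable {S : Set Ordinal.{0}} (hS : S.Countable)
    (hSω : S ⊆ Iio ω₁) : ∃ μ < ω₁, S ⊆ Iio μ := by
  have := hS.to_subtype
  refine ⟨⨆ α : S, (α + 1 : Ordinal.{0}),
    Ordinal.iSup_lt_omega_one fun α => add_one_lt_omega_one (hSω α.2), fun α hα => ?_⟩
  exact (lt_add_one α).trans_le (Ordinal.le_iSup (fun α : S => (α + 1 : Ordinal.{0})) ⟨α, hα⟩)

theorem isSuccLimit_blockMid (α : Ordinal.{0}) : IsSuccLimit (blockMid α) :=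
  Ordinal.isSuccLimit_add _ Ordinal.isSuccLimit_omega0

theorem isSuccLimit_blockStart_add_one (α : Ordinal.{0}) : IsSuccLimit (blockStart (α + 1)) := by
  rw [blockStart_add_one]
  exact Ordinal.isSuccLimit_add _ Ordinal.isSuccLimit_omega0

section Closure

variable {Z : Type*} [TopologicalSpace Z] {f : Ordinal.{0} → Z} (hf : ContinuousOn f (Iio ω₁))
include hf

theorem mem_closure_image_of_isLUB {S : Set Ordinal.{0}} {ξ : Ordinal.{0}} (hξ : ξ < ω₁)
    (hS : IsLUB S ξ) (hne : S.Nonempty) : f ξ ∈ closure (f '' S) :=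
  ((hf ξ hξ).mono fun _ hη => (hS.1 hη).trans_lt hξ).mem_closure_image (hS.mem_closure hne)

theorem mem_closure_image_add_one_Ico {β ξ : Ordinal.{0}} (hξ : ξ < ω₁) (hlim : IsSuccLimit ξ)
    (hβ : β < ξ) : f ξ ∈ closure ((fun η => f (η + 1)) '' Ico β ξ) := by
  rw [← image_image f (· + 1)]
  refine mem_closure_image_of_isLUB hf hξ ⟨?_, fun b hb => ?_⟩ ⟨_, β, ⟨le_rfl, hβ⟩, rfl⟩
  · rintro _ ⟨η, hη, rfl⟩
    exact (hlim.add_one_lt hη.2).le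
  · by_contra! hbξ
    have hmax : max β b + 1 ≤ b := hb ⟨_, ⟨le_max_left _ _, max_lt hβ hbξ⟩, rfl⟩
    exact ((lt_add_one _).trans_le hmax).not_ge (le_max_right _ _)

theorem apply_blockStart_mem_closure {α : Ordinal.{0}} (hα : α < ω₁) (hlim : IsSuccLimit α) :
    f (blockStart α) ∈ closure ((fun β => f (blockMid β)) '' Iio α) := by
  rw [← image_image f blockMid]
  refine mem_closure_image_of_isLUB hf (blockStart_lt_omega_one hα) ⟨?_, fun b hb => ?_⟩
    (hlim.nonempty_Iio.image _)
  · rintro _ ⟨β, hβ, rfl⟩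
    exact blockMid_le_blockStart_iff.2 hβ
  · refine isNormal_blockStart.le_iff_forall_le hlim |>.2 fun β hβ => ?_
    exact (blockStart_lt_blockMid_iff.2 le_rfl).le.trans (hb (mem_image_of_mem _ hβ))

end Closure

variable {K : Type u} [TopologicalSpace K] {X : Ordinal.{0} → K} {x' : K}

/-- In each block the middle is glued to the end of the block, and the start of the block with
number `ω` is glued to `x'`, which is meant to be a cluster point of the middles. -/
def blockGluing (X : Ordinal.{0} → K) (x' : K) : Set (K × K) :=
  insert (X (blockStart ω), x')
    ((fun α => (X (blockMid α), X (blockStart (α + 1)))) '' Iio ω₁)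

local notation "q" => Glued.mk (blockGluing X x')

theorem mem_gluingAlgebra_blockGluing {φ : C(K, ℝ)} {S : Set Ordinal.{0}}
    (hφ : ∀ η < ω₁, φ (X η) = S.indicator 1 η) (hφx' : φ x' = 0) (hω : blockStart ω ∉ S)
    (hS : ∀ α < ω₁, blockMid α ∈ S ↔ blockStart (α + 1) ∈ S) :
    φ ∈ gluingAlgebra (blockGluing X x') := by
  refine forall_mem_insert.2 ⟨?_, forall_mem_image.2 fun α hα => ?_⟩
  · rw [hφx', hφ _ (blockStart_lt_omega_one Ordinal.omega0_lt_omega_one), indicator_of_notMem hω]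
  · rw [hφ _ (blockMid_lt_omega_one hα), hφ _ (blockStart_lt_omega_one (add_one_lt_omega_one hα))]
    exact indicator_eq_indicator (hS α hα) rfl

theorem mk_blockMid_eq {α : Ordinal.{0}} (hα : α < ω₁) :
    q (X (blockMid α)) = q (X (blockStart (α + 1))) :=
  Glued.mk_eq_mk.2 fun _ hφ => hφ _ (mem_insert_of_mem _ (mem_image_of_mem _ hα))

theorem mk_blockStart_omega_mem_closure (hx' : MapClusterPt x' (𝓝[<] ω₁) fun α => X (blockMid α)) :
    q (X (blockStart ω)) ∈ closure ((fun α => q (X (blockMid α))) '' Ico ω ω₁) := by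
  have hglued : q (X (blockStart ω)) = q x' :=
    Glued.mk_eq_mk.2 fun _ hφ => hφ _ (mem_insert _ _)
  rw [hglued]
  refine isClosed_closure.mem_of_mapClusterPt (hx'.continuousAt_comp (q).continuous.continuousAt) ?_
  filter_upwards [Ico_mem_nhdsLT Ordinal.omega0_lt_omega_one] with α hα
  exact subset_closure (mem_image_of_mem _ hα)

namespace IsOmegaOneCopy

variable (hX : IsOmegaOneCopy X)
  (hx' : MapClusterPt x' (𝓝[<] ω₁) fun α => X (blockMid α))

include hX hx' in
theorem exists_indicator_Ioc {ξ ζ : Ordinal.{0}} (hξ : ξ < ω₁) (hζ : ζ < ω₁) :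
    ∃ φ : C(K, ℝ), (∀ η < ω₁, φ (X η) = (Ioc ξ ζ).indicator 1 η) ∧ φ x' = 0 := by
  obtain ⟨φ, hφ₀, hφ₁⟩ := hX.exists_cut ξ hξ
  obtain ⟨ψ, hψ₀, hψ₁⟩ := hX.exists_cut ζ hζ
  have hzero : ∀ η ∈ Ioo ζ ω₁, (φ * (1 - ψ)) (X η) = 0 := fun η hη => by simp [hψ₁ η hη]
  refine ⟨φ * (1 - ψ), fun η hη => ?_, ?_⟩
  · rcases le_or_gt η ξ with hηξ | hξη
    · simp [hφ₀ η hηξ, hηξ.not_gt]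
    · rcases le_or_gt η ζ with hηζ | hζη
      · simp [hφ₁ η ⟨hξη, hη⟩, hψ₀ η hηζ, hξη, hηζ]
      · simp [hψ₁ η ⟨hζη, hη⟩, hζη.not_ge]
  · refine (isClosed_singleton.preimage (φ * (1 - ψ)).continuous).mem_of_mapClusterPt hx' ?_
    filter_upwards [Ico_mem_nhdsLT hζ] with α hα
    exact hzero _ ⟨(isNormal_blockStart.strictMono.le_apply.trans' hα.1).trans_lt
      (blockStart_lt_blockMid_iff.2 le_rfl), blockMid_lt_omega_one hα.2⟩

include hX in
theorem continuousOn_mk : ContinuousOn (fun η => q (X η)) (Iio ω₁) :=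
  (q).continuous.comp_continuousOn hX.continuousOn

include hX hx' in
theorem mk_add_one_ne_mk {ξ η : Ordinal.{0}} (hξ : ξ < ω₁) (hη : η < ω₁) (hlim : IsSuccLimit η) :
    q (X (ξ + 1)) ≠ q (X η) := by
  have hξ' := add_one_lt_omega_one hξ
  obtain ⟨φ, hφ, hφx'⟩ := hX.exists_indicator_Ioc hx' hξ hξ'
  have hlimit {ζ : Ordinal.{0}} (hζ : IsSuccLimit ζ) : ζ ∉ Ioc ξ (ξ + 1) := fun h =>
    (hζ.add_one_lt h.1).not_ge h.2
  have hmem : φ ∈ gluingAlgebra (blockGluing X x') := by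
    refine mem_gluingAlgebra_blockGluing hφ hφx'
      (hlimit (isNormal_blockStart.map_isSuccLimit Ordinal.isSuccLimit_omega0)) fun α _ => ?_
    exact iff_of_false (hlimit (isSuccLimit_blockMid α)) (hlimit (isSuccLimit_blockStart_add_one α))
  intro h
  have hφη := Glued.mk_eq_mk.1 h φ hmem
  rw [hφ _ hξ', hφ _ hη, indicator_of_notMem (hlimit hlim),
    indicator_of_mem (right_mem_Ioc.2 (lt_add_one ξ))] at hφη
  exact one_ne_zero hφη

include hX hx' in
theorem exists_continuousOn_compl_mk_blockMid {α : Ordinal.{0}} (hα : α < ω₁) :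
    ∃ g : Glued (blockGluing X x') → ℝ, ContinuousOn g {q (X (blockMid α))}ᶜ ∧ ∀ η < ω₁,
      g (q (X (η + 1))) = (Ioc (blockMid α) (blockStart (α + 1))).indicator 1 (η + 1) := by
  have hmid := blockMid_lt_omega_one hα
  obtain ⟨φ, hφ, hφx'⟩ :=
    hX.exists_indicator_Ioc hx' hmid (blockStart_lt_omega_one (add_one_lt_omega_one hα))
  have hpairs : ∀ p ∈ blockGluing X x', p ≠ (X (blockMid α), X (blockStart (α + 1))) →
      φ p.1 = φ p.2 := by
    refine forall_mem_insert.2 ⟨fun _ => ?_, forall_mem_image.2 fun β hβ hne => ?_⟩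
    · have hω : ω ≠ α + 1 := fun h => not_isSuccLimit_add_one α (h ▸ Ordinal.isSuccLimit_omega0)
      rw [hφx', hφ _ (blockStart_lt_omega_one Ordinal.omega0_lt_omega_one),
        indicator_of_notMem (mt blockStart_mem_Ioc_iff.1 hω)]
    · have hβα : β + 1 ≠ α + 1 := fun h => hne (by rw [Order.add_one_inj.1 h])
      rw [hφ _ (blockMid_lt_omega_one hβ), hφ _ (blockStart_lt_omega_one (add_one_lt_omega_one hβ)),
        indicator_of_notMem (blockMid_notMem_Ioc α β),
        indicator_of_notMem (mt blockStart_mem_Ioc_iff.1 hβα)]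
  obtain ⟨g, hg, hgφ⟩ := Glued.exists_continuousOn_compl hpairs
  refine ⟨g, hg, fun η hη => ?_⟩
  rw [hgφ _ (hX.mk_add_one_ne_mk hx' hη hmid (isSuccLimit_blockMid α)),
    hφ _ (add_one_lt_omega_one hη)]

include hX hx' in
theorem mk_blockStart_omega_notMem_closure {S : Set Ordinal.{0}} (hS : S.Countable)
    (hSω : S ⊆ Ico ω ω₁) :
    q (X (blockStart ω)) ∉ closure ((fun α => q (X (blockMid α))) '' S) := by
  intro hmem
  have hω := blockStart_lt_omega_one Ordinal.omega0_lt_omega_one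
  obtain ⟨μ, hμ, hSμ⟩ := exists_lt_omega_one_of_countable hS (hSω.trans Ico_subset_Iio_self)
  obtain ⟨φ, hφ, hφx'⟩ := hX.exists_indicator_Ioc hx' hω (blockStart_lt_omega_one hμ)
  have hmid {α : Ordinal.{0}} : blockMid α ∈ Ioc (blockStart ω) (blockStart μ) ↔ α ∈ Ico ω μ := by
    rw [mem_Ioc, blockStart_lt_blockMid_iff, blockMid_le_blockStart_iff, mem_Ico]
  have hφP : φ ∈ gluingAlgebra (blockGluing X x') := by
    refine mem_gluingAlgebra_blockGluing hφ hφx' (fun h => h.1.false) fun α _ => hmid.trans ?_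
    rw [mem_Ioc, isNormal_blockStart.strictMono.lt_iff_lt, isNormal_blockStart.strictMono.le_iff_le,
      Order.lt_add_one_iff, Order.add_one_le_iff, mem_Ico]
  have hclosed : IsClosed {z | Glued.lift ⟨φ, hφP⟩ z = 1} :=
    isClosed_eq (Glued.lift _).continuous continuous_const
  have hone : Glued.lift ⟨φ, hφP⟩ (q (X (blockStart ω))) = 1 := by
    refine closure_minimal (image_subset_iff.2 fun α hα => ?_) hclosed hmem
    change φ (X (blockMid α)) = 1
    rw [hφ _ (blockMid_lt_omega_one (hSω hα).2),
      indicator_of_mem (hmid.2 ⟨(hSω hα).1, hSμ hα⟩), Pi.one_apply]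
  rw [Glued.lift_mk, hφ _ hω, indicator_of_notMem fun h => h.1.false] at hone
  exact zero_ne_one hone

variable [CompactSpace K] (𝔰 : RetractionalSkeleton (Glued (blockGluing X x')))

include hX hx' in
theorem mk_blockMid_mem_inducedSet {α : Ordinal.{0}} (hα : α < ω₁) :
    q (X (blockMid α)) ∈ 𝔰.inducedSet := by
  have hmid := blockMid_lt_omega_one hα
  have hend := blockStart_lt_omega_one (add_one_lt_omega_one hα)
  have hmidlim := isSuccLimit_blockMid α
  have hendlim := isSuccLimit_blockStart_add_one α
  obtain ⟨g, hg, hgsucc⟩ := hX.exists_continuousOn_compl_mk_blockMid hx' hα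
  have hclosure {β ξ : Ordinal.{0}} (hξ : ξ < ω₁) (hlim : IsSuccLimit ξ) (hβ : β < ξ) :
      q (X ξ) ∈ closure ((fun η => q (X (η + 1))) '' Ico β ξ) :=
    mem_closure_image_add_one_Ico hX.continuousOn_mk hξ hlim hβ
  have hclosure_end : q (X (blockMid α)) ∈
      closure ((fun η => q (X (η + 1))) '' Ico (blockMid α) (blockStart (α + 1))) := by
    rw [mk_blockMid_eq hα]
    exact hclosure hend hendlim (blockMid_lt_blockStart_iff.2 (lt_add_one α))
  have hcountable {β ξ : Ordinal.{0}} (hξ : ξ < ω₁) :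
      ((fun η => q (X (η + 1))) '' Ico β ξ).Countable :=
    ((countable_Iio_of_lt_omega_one hξ).mono Ico_subset_Iio_self).image _
  refine 𝔰.mem_inducedSet_of_continuousOn_compl hg (hcountable hmid) (hcountable hend)
    (hclosure hmid hmidlim (blockStart_lt_blockMid_iff.2 le_rfl)) hclosure_end
    (forall_mem_image.2 fun η hη => ?_) (forall_mem_image.2 fun η hη => ?_)
  · refine ⟨hX.mk_add_one_ne_mk hx' (hη.2.trans hmid) hmid hmidlim, ?_⟩
    rw [hgsucc η (hη.2.trans hmid),
      indicator_of_notMem fun h => h.1.not_gt (hmidlim.add_one_lt hη.2)]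
  · refine ⟨hX.mk_add_one_ne_mk hx' (hη.2.trans hend) hmid hmidlim, ?_⟩
    rw [hgsucc η (hη.2.trans hend),
      indicator_of_mem (mem_Ioc.2 ⟨Order.lt_add_one_iff.2 hη.1, (hendlim.add_one_lt hη.2).le⟩),
      Pi.one_apply]

include hX hx' in
theorem mk_blockStart_omega_mem_inducedSet : q (X (blockStart ω)) ∈ 𝔰.inducedSet := by
  have hω : ω < ω₁ := Ordinal.omega0_lt_omega_one
  refine 𝔰.closure_subset_inducedSet ((countable_Iio_of_lt_omega_one hω).image _) ?_
    (apply_blockStart_mem_closure hX.continuousOn_mk hω Ordinal.isSuccLimit_omega0)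
  exact image_subset_iff.2 fun n hn => hX.mk_blockMid_mem_inducedSet hx' 𝔰 (lt_trans hn hω)

include hX hx' in
theorem not_hasRetractionalSkeleton_glued :
    ¬ HasRetractionalSkeleton (Glued (blockGluing X x')) := by
  rintro ⟨𝔰⟩
  obtain ⟨N, hNS, hN, hmem⟩ := 𝔰.exists_countable_mem_closure
    (image_subset_iff.2 fun α hα => hX.mk_blockMid_mem_inducedSet hx' 𝔰 hα.2)
    (hX.mk_blockStart_omega_mem_inducedSet hx' 𝔰) (mk_blockStart_omega_mem_closure hx')
  obtain ⟨S, hS, hScount, rfl⟩ := exists_countable_subset_image_eq hN hNS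
  exact hX.mk_blockStart_omega_notMem_closure hx' hScount hS hmem

include hX in
theorem exists_image_not_hasRetractionalSkeleton :
    ∃ P : Set (K × K), ¬ HasRetractionalSkeleton (Glued P) := by
  have : (𝓝[<] (ω₁ : Ordinal.{0})).NeBot :=
    (Cardinal.isSuccLimit_omega 1).isLUB_Iio.nhdsWithin_neBot
      (Cardinal.isSuccLimit_omega 1).nonempty_Iio
  obtain ⟨x', hx'⟩ := exists_clusterPt_of_compactSpace (map (fun α => X (blockMid α)) (𝓝[<] ω₁))
  exact ⟨_, hX.not_hasRetractionalSkeleton_glued hx'⟩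

end IsOmegaOneCopy

end BlockGluing

/-- A compact Hausdorff space `K` is Corson compact if and only if every continuous image
of `K` has a retractional skeleton. -/
theorem corson_iff_every_image_hasRetractionalSkeleton
    (K : Type u) [TopologicalSpace K] [CompactSpace K] [T2Space K] :
    IsCorsonCompact K ↔
      ∀ (L : Type u) [TopologicalSpace L] [CompactSpace L] [T2Space L],
        (∃ f : K → L, Continuous f ∧ Function.Surjective f) → HasRetractionalSkeleton L := by
  constructor
  · rintro ⟨I, A, hA, hsupp, ⟨e⟩⟩ L _ _ _ ⟨f, hf, hsurj⟩
    exact hasRetractionalSkeleton_image hA hsupp (f := ⟨f ∘ e.symm, hf.comp e.symm.continuous⟩)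
      (hsurj.comp e.symm.surjective)
  · intro himage
    obtain ⟨𝔰⟩ := himage K ⟨id, continuous_id, Function.surjective_id⟩
    by_cases hD : 𝔰.inducedSet = univ
    · exact 𝔰.isCorsonCompact_of_inducedSet_eq_univ hD
    · obtain ⟨X, hX⟩ := RetractionalSkeleton.exists_isOmegaOneCopy hD
      obtain ⟨P, hP⟩ := hX.exists_image_not_hasRetractionalSkeleton
      exact (hP (himage _ ⟨Glued.mk P, (Glued.mk P).continuous, Glued.mk_surjective P⟩)).elim
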